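/- Any two injective Lie algebra homomorphisms ε, ε' from the complex simple Lie algebra e₆ to the complex simple Lie algebra e₇ are conjugate by an automorphism of e₇: there exists a Lie algebra automorphism φ of e₇ such that ε' = φ ∘ ε. -/

import Mathlib

/-!
Let `ε : e₆ → e₇` be an embedding. The proof extends `ε` along the inclusion `j : e₆ → e₇` of
Dynkin diagrams to an automorphism `ε̃` of `e₇`, so that `ε = ε̃ ∘ j`. Doing the same for `ε'`, the
automorphism `ε̃' ∘ ε̃⁻¹` carries `ε` to `ε'`.

*Structure of the Serre algebras.* For Lie algebras generated by elements satisfying the Serre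
relations, the triangular decomposition (`SerreData.triangular`) and the action of the `sl₂`-triples
on weight spaces give: every nonzero weight is in the orbit of a simple root under reflections
(`SerreData.weights`), so `dim e₆ ≤ 78` and `dim e₇ ≤ 133`; moreover `e₇`, if nonzero, is simple with
nondegenerate Killing form and `dim e₇ > 78` (`ideal_e₇`, `isKilling_e₇`, `lt_finrank_e₇`).
No further knowledge of these algebras is needed; should `e₆` be zero, the claim is trivial.

*Branching.* Decompose `e₇` into generalised weight spaces for the Cartan elements of `ε(e₆)`. A
dominant weight other than `0, ω₁, ω₂, ω₆` would bring along at least 134 weights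
(`SerreData.dominant`), so the weights are among `0`, the 72 roots and the weights of the two
27-dimensional representations. Counting with `72 a + 6 + 27 (b + c) ≤ 133`, and using that the
Killing form pairs opposite weights, the roots have multiplicity one and `(b, c)` is `(0, 0)` or
`(1, 1)` (`SerreData.mults`). In the first case `ε(e₆)` is an ideal (`SerreData.isIdeal`), hence
equals `e₇`, against `dim e₇ > 78`.

*Extension.* In the second case let `x` span the weight space of `-ω₆` and `y` that of `ω₆`. Most
brackets with the generators of `ε(e₆)` vanish for lack of a weight, and after rescaling `y` the
remaining Serre relations of `E₇` hold for the images of the generators of `e₆` together with `x`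
and `y` (`SerreData.extend`). The universal property of the Serre presentation yields `ε̃`, which is
injective because `e₇` is simple and bijective because `e₇` is finite-dimensional.
-/

namespace E6E7

open Module CartanMatrix

set_option linter.unusedSectionVars false

/-! ### Operators satisfying the `sl₂` relations -/

section Sl2

variable {V : Type*} [AddCommGroup V] [Module ℂ V]

/-- Three operators satisfying the `sl₂` relations `[X, Y] = Z`, `[Z, X] = 2X`, `[Z, Y] = -2Y`,
with `X` and `Y` locally nilpotent. -/
structure Sl2Ops (X Y Z : End ℂ V) : Prop where
  xy : ∀ v, X (Y v) = Y (X v) + Z v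
  zx : ∀ v, Z (X v) = X (Z v) + (2 : ℂ) • X v
  zy : ∀ v, Z (Y v) = Y (Z v) - (2 : ℂ) • Y v
  nilx : ∀ v, ∃ n : ℕ, (X ^ n) v = 0
  nily : ∀ v, ∃ n : ℕ, (Y ^ n) v = 0

namespace Sl2Ops

variable {X Y Z : End ℂ V}

theorem symm (s : Sl2Ops X Y Z) : Sl2Ops Y X (-Z) where
  xy v := by simp [s.xy]
  zx v := by simp [s.zy]; abel
  zy v := by simp [s.zx]; abel
  nilx := s.nily
  nily := s.nilx

theorem z_pow_y (s : Sl2Ops X Y Z) {v : V} {μ : ℂ} (hv : Z v = μ • v) (k : ℕ) :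
    Z ((Y ^ k) v) = (μ - 2 * k) • (Y ^ k) v := by
  induction k with
  | zero => simpa using hv
  | succ k ih =>
    rw [pow_succ', Module.End.mul_apply, s.zy, ih]
    simp only [map_smul, ← sub_smul]
    congr 1; push_cast; ring

theorem z_pow_x (s : Sl2Ops X Y Z) {v : V} {μ : ℂ} (hv : Z v = μ • v) (k : ℕ) :
    Z ((X ^ k) v) = (μ + 2 * k) • (X ^ k) v := by
  have := s.symm.z_pow_y (v := v) (μ := -μ) (by simp [hv]) k
  simp only [LinearMap.neg_apply, neg_eq_iff_eq_neg] at this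
  rw [this, ← neg_smul]; congr 1; ring

theorem x_pow_y (s : Sl2Ops X Y Z) {v : V} {μ : ℂ} (hv : Z v = μ • v) (k : ℕ) :
    X ((Y ^ (k + 1)) v) = (Y ^ (k + 1)) (X v) + ((k + 1) * (μ - k)) • (Y ^ k) v := by
  induction k with
  | zero => simp [s.xy, hv]
  | succ k ih =>
    rw [pow_succ', Module.End.mul_apply, s.xy, ih, s.z_pow_y hv, map_add, map_smul,
      ← Module.End.mul_apply, ← pow_succ', ← Module.End.mul_apply Y (Y ^ k), ← pow_succ',
      add_assoc, ← add_smul]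
    congr 2; push_cast; ring

theorem y_pow_x (s : Sl2Ops X Y Z) {v : V} {μ : ℂ} (hv : Z v = μ • v) (k : ℕ) :
    Y ((X ^ (k + 1)) v) = (X ^ (k + 1)) (Y v) - ((k + 1) * (μ + k)) • (X ^ k) v := by
  rw [s.symm.x_pow_y (v := v) (μ := -μ) (by simp [hv]) k,
    sub_eq_add_neg ((X ^ (k + 1)) (Y v)), ← neg_smul]
  congr 2; ring

/-- On a weight space of natural weight, `YX` has no negative eigenvalue. -/
theorem yx_ne (s : Sl2Ops X Y Z) {v : V} {m : ℕ} (hv : Z v = (m : ℂ) • v) (h0 : v ≠ 0)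
    {c : ℕ} (hc : 0 < c) : Y (X v) + (c : ℂ) • v ≠ 0 := by
  intro hyx
  obtain ⟨k, hk, hk'⟩ := Nat.exists_not_and_succ_of_not_zero_of_exists
    (p := fun n => (X ^ n) v = 0) (by simpa using h0) (s.nilx v)
  have hXv : Z (X v) = ((m : ℂ) + 2) • X v := by rw [s.zx, hv, map_smul, add_smul]
  cases k with
  | zero =>
    have : X v = 0 := by simpa using hk'
    rw [this, map_zero, zero_add] at hyx
    rcases smul_eq_zero.mp hyx with h | h
    · exact hc.ne' (by exact_mod_cast h)
    · exact h0 h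
  | succ k =>
    have h1 := s.y_pow_x hXv k
    rw [← Module.End.mul_apply (X ^ (k + 1)) X, ← pow_succ, hk', map_zero,
      eq_neg_of_add_eq_zero_left hyx, map_neg, map_smul, ← Module.End.mul_apply, ← pow_succ] at h1
    have h2 : ((c : ℂ) + (k + 1) * (m + 2 + k)) • (X ^ (k + 1)) v = 0 := by
      rw [add_smul]
      have := congrArg Neg.neg h1.symm
      simpa [add_comm] using this
    rcases smul_eq_zero.mp h2 with h | h
    · have : c + (k + 1) * (m + 2 + k) = 0 := by exact_mod_cast h
      omega
    · exact hk h

/-- A nonzero vector of weight `m` is not annihilated by `Y ^ k` for `k ≤ m`. -/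
theorem pow_y_ne (s : Sl2Ops X Y Z) {m : ℕ} (k : ℕ) (hk : k ≤ m) :
    ∀ {v : V}, Z v = (m : ℂ) • v → v ≠ 0 → (Y ^ k) v ≠ 0 := by
  induction k with
  | zero => intro v _ h; simpa using h
  | succ k ih =>
    intro v hv h0 h
    have hXv : Z (X v) = ((m : ℂ) + 2) • X v := by rw [s.zx, hv, map_smul, add_smul]
    have h1 := s.x_pow_y hv k
    rw [h, map_zero, pow_succ, Module.End.mul_apply, ← map_smul, ← map_add] at h1
    have hc : ((k : ℂ) + 1) * (m - k) = (((k + 1) * (m - k) : ℕ) : ℂ) := by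
      push_cast [Nat.cast_sub (show k ≤ m by omega)]; ring
    rw [hc] at h1
    refine ih (by omega) ?_ (s.yx_ne hv h0 (c := (k + 1) * (m - k)) ?_) h1.symm
    · rw [map_add, s.zy, hXv, map_smul, map_smul, hv, smul_add, add_smul, smul_comm]
      abel
    · exact Nat.mul_pos (by omega) (by omega)

theorem pow_x_ne (s : Sl2Ops X Y Z) {m : ℕ} (k : ℕ) (hk : k ≤ m) {v : V}
    (hv : Z v = -(m : ℂ) • v) (h0 : v ≠ 0) : (X ^ k) v ≠ 0 :=
  s.symm.pow_y_ne k hk (by simp [hv]) h0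

/-- Weights of `sl₂` acting locally nilpotently are integers. -/
theorem weight_int (s : Sl2Ops X Y Z) {v : V} {μ : ℂ} (hv : Z v = μ • v) (h0 : v ≠ 0) :
    ∃ n : ℤ, μ = n := by
  obtain ⟨k, hk, hk'⟩ := Nat.exists_not_and_succ_of_not_zero_of_exists
    (p := fun n => (X ^ n) v = 0) (by simpa using h0) (s.nilx v)
  have hp := s.z_pow_x hv k
  set p := (X ^ k) v
  obtain ⟨n, hn, hn'⟩ := Nat.exists_not_and_succ_of_not_zero_of_exists
    (p := fun n => (Y ^ n) p = 0) (by simpa using hk) (s.nily p)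
  have h1 := s.x_pow_y hp n
  have hXp : X p = 0 := by rw [← hk', pow_succ', Module.End.mul_apply]
  rw [hn', hXp, map_zero, map_zero, zero_add] at h1
  rcases smul_eq_zero.mp h1.symm with h | h
  · have h2 : (n : ℂ) + 1 ≠ 0 := by exact_mod_cast n.succ_ne_zero
    have h3 := (mul_eq_zero.mp h).resolve_left h2
    refine ⟨n - 2 * k, ?_⟩
    push_cast
    linear_combination h3
  · exact absurd h hn

/-- In finite dimension local nilpotency is automatic: the powers of `X` are eigenvectors of
`[Z, ·]` with distinct eigenvalues. -/
theorem isNilpotent_of_lie [FiniteDimensional ℂ V] {c : ℂ} (hc : c ≠ 0)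
    (zx : ∀ v, Z (X v) = X (Z v) + c • X v) : ∃ n : ℕ, X ^ n = 0 := by
  by_contra! hne
  let T : End ℂ (End ℂ V) := LinearMap.mulLeft ℂ Z - LinearMap.mulRight ℂ Z
  have hT : ∀ n : ℕ, T (X ^ n) = (n * c : ℂ) • X ^ n := by
    intro n
    induction n with
    | zero => simp [T]
    | succ n ih =>
      have hzx : Z * X = X * Z + c • X := LinearMap.ext fun v => by simpa using zx v
      have ih' : Z * X ^ n = X ^ n * Z + (n * c : ℂ) • X ^ n := by
        rw [← ih]; simp [T]
      change Z * X ^ (n + 1) - X ^ (n + 1) * Z = _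
      rw [pow_succ, ← mul_assoc, ih', add_mul, mul_assoc, hzx, mul_add, smul_mul_assoc,
        mul_smul_comm, ← mul_assoc, add_assoc, ← add_smul, add_sub_cancel_left]
      congr 1; push_cast; ring
  have hinj : Function.Injective fun n : ℕ => (n * c : ℂ) := fun a b hab => by
    simpa [hc] using hab
  refine Set.infinite_range_of_injective hinj
    ((Module.End.finite_hasEigenvalue T).subset ?_)
  rintro _ ⟨n, rfl⟩
  exact Module.End.hasEigenvalue_of_hasEigenvector
    ⟨Module.End.mem_eigenspace_iff.mpr (hT n), hne n⟩

end Sl2Ops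

end Sl2

/-! ### The Serre presentation -/

section Serre

/-- Elements `e i, f i, h i` of a complex Lie algebra satisfying the Serre relations of `A`. -/
structure SerreData {ι : Type*} (A : Matrix ι ι ℤ) {L : Type*} [LieRing L] [LieAlgebra ℂ L]
    (e f h : ι → L) : Prop where
  hh : ∀ i j, ⁅h i, h j⁆ = 0
  ef : ∀ i, ⁅e i, f i⁆ = h i
  ef_ne : ∀ i j, i ≠ j → ⁅e i, f j⁆ = 0
  he : ∀ i j, ⁅h i, e j⁆ = (A i j : ℂ) • e j
  hf : ∀ i j, ⁅h i, f j⁆ = -(A i j : ℂ) • f j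
  ade : ∀ i j, ((LieAlgebra.ad ℂ L (e i)) ^ (-A i j).toNat) ⁅e i, e j⁆ = 0
  adf : ∀ i j, ((LieAlgebra.ad ℂ L (f i)) ^ (-A i j).toNat) ⁅f i, f j⁆ = 0

/-- The families `e` and `f` generate the Lie algebra `L`. -/
def Generates {ι L : Type*} [LieRing L] [LieAlgebra ℂ L] (e f : ι → L) : Prop :=
  ∀ K : LieSubalgebra ℂ L, (∀ i, e i ∈ K) → (∀ i, f i ∈ K) → ∀ x, x ∈ K

variable {ι : Type*} {A : Matrix ι ι ℤ} {L : Type*} [LieRing L] [LieAlgebra ℂ L] {e f h : ι → L}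

theorem SerreData.swap (S : SerreData A e f h) : SerreData A f e (-h) where
  hh i j := by simp [S.hh]
  ef i := by rw [← lie_skew, S.ef]; rfl
  ef_ne i j hij := by rw [← lie_skew, S.ef_ne j i hij.symm, neg_zero]
  he i j := by simp [S.hf]
  hf i j := by simp [S.he]
  ade := S.adf
  adf := S.ade

theorem Generates.swap (g : Generates e f) : Generates f e := fun K he hf => g K hf he

/-- The Serre relations are preserved by Lie algebra homomorphisms. -/
theorem SerreData.map (S : SerreData A e f h) {L' : Type*} [LieRing L'] [LieAlgebra ℂ L']
    (φ : L →ₗ⁅ℂ⁆ L') : SerreData A (φ ∘ e) (φ ∘ f) (φ ∘ h) := by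
  have had : ∀ (x y : L) (n : ℕ), ((LieAlgebra.ad ℂ L' (φ x)) ^ n) (φ y) =
      φ (((LieAlgebra.ad ℂ L x) ^ n) y) := by
    intro x y n
    induction n with
    | zero => simp
    | succ n ih => simp [pow_succ', ih]
  constructor
  · intro i j; simp [← LieHom.map_lie, S.hh]
  · intro i; simp [← LieHom.map_lie, S.ef]
  · intro i j hij; simp [← LieHom.map_lie, S.ef_ne i j hij]
  · intro i j; simp [← LieHom.map_lie, S.he]
  · intro i j; simp [← LieHom.map_lie, S.hf]
  · intro i j
    have := S.ade i j
    simp only [Function.comp, ← LieHom.map_lie] at *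
    rw [had, this, map_zero]
  · intro i j
    have := S.adf i j
    simp only [Function.comp, ← LieHom.map_lie] at *
    rw [had, this, map_zero]

section Presentation

variable [DecidableEq ι] (A)

open CartanMatrix in
/-- The quotient map from the free Lie algebra on the generators. -/
noncomputable def proj : FreeLieAlgebra ℂ (Generators ι) →ₗ⁅ℂ⁆ A.ToLieAlgebra ℂ where
  toFun x := (LieSubmodule.Quotient.mk x : FreeLieAlgebra ℂ _ ⧸ Relations.toIdeal ℂ A)
  map_add' _ _ := rfl
  map_smul' _ _ := rfl
  map_lie' {x y} := LieSubmodule.Quotient.mk_bracket (Relations.toIdeal ℂ A) x y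

theorem proj_surjective : Function.Surjective (proj A) :=
  LieSubmodule.Quotient.surjective_mk' (CartanMatrix.Relations.toIdeal ℂ A)

theorem proj_eq_zero_iff (x) : proj A x = 0 ↔ x ∈ CartanMatrix.Relations.toIdeal ℂ A :=
  LieSubmodule.Quotient.mk_eq_zero (CartanMatrix.Relations.toIdeal ℂ A)

/-- The generator `E i` of the Lie algebra of a Cartan matrix. -/
noncomputable def genE (i : ι) : A.ToLieAlgebra ℂ := proj A (.of ℂ (.E i))
/-- The generator `F i` of the Lie algebra of a Cartan matrix. -/
noncomputable def genF (i : ι) : A.ToLieAlgebra ℂ := proj A (.of ℂ (.F i))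
/-- The generator `H i` of the Lie algebra of a Cartan matrix. -/
noncomputable def genH (i : ι) : A.ToLieAlgebra ℂ := proj A (.of ℂ (.H i))

open CartanMatrix in
theorem serreData_gen : SerreData A (genE A) (genF A) (genH A) := by
  have key : ∀ x ∈ Relations.toSet ℂ A, proj A x = 0 := fun x hx =>
    (proj_eq_zero_iff A x).mpr (LieSubmodule.subset_lieSpan hx)
  have had : ∀ (x y : FreeLieAlgebra ℂ (Generators ι)) (n : ℕ),
      ((LieAlgebra.ad ℂ _ (proj A x)) ^ n) (proj A y) =
      proj A (((LieAlgebra.ad ℂ _ x) ^ n) y) := by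
    intro x y n
    induction n with
    | zero => simp
    | succ n ih => simp [pow_succ', ih]
  constructor
  · intro i j
    have := key (Relations.HH ℂ (i, j)) (by simp [Relations.toSet])
    simpa [Relations.HH, genH] using this
  · intro i
    have := key (Relations.EF ℂ (i, i)) (by simp [Relations.toSet])
    simpa [Relations.EF, genH, genE, genF, sub_eq_zero] using this
  · intro i j hij
    have := key (Relations.EF ℂ (i, j)) (by simp [Relations.toSet])
    simpa [Relations.EF, genH, genE, genF, hij] using this
  · intro i j
    have := key (Relations.HE ℂ A (i, j)) (by simp [Relations.toSet])
    simpa [Relations.HE, genH, genE, sub_eq_zero, Int.cast_smul_eq_zsmul] using this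
  · intro i j
    have := key (Relations.HF ℂ A (i, j)) (by simp [Relations.toSet])
    simpa [Relations.HF, genH, genF, add_eq_zero_iff_eq_neg, Int.cast_smul_eq_zsmul] using this
  · intro i j
    have := key (Relations.adE ℂ A (i, j)) (by simp [Relations.toSet])
    simp only [Relations.adE, Function.uncurry, Function.comp] at this
    rw [← had, LieHom.map_lie] at this
    exact this
  · intro i j
    have := key (Relations.adF ℂ A (i, j)) (by simp [Relations.toSet])
    simp only [Relations.adF, Function.uncurry, Function.comp] at this
    rw [← had, LieHom.map_lie] at this
    exact this

theorem generates_gen : Generates (genE A) (genF A) := by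
  intro K hE hF x
  obtain ⟨y, rfl⟩ := proj_surjective A x
  have hH : ∀ i, genH A i ∈ K := fun i => by
    rw [← (serreData_gen A).ef]; exact K.lie_mem (hE i) (hF i)
  let φ : FreeLieAlgebra ℂ (CartanMatrix.Generators ι) →ₗ⁅ℂ⁆ K :=
    FreeLieAlgebra.lift ℂ fun g => match g with
      | .H i => ⟨genH A i, hH i⟩
      | .E i => ⟨genE A i, hE i⟩
      | .F i => ⟨genF A i, hF i⟩
  have : K.incl.comp φ = proj A := by
    ext g
    cases g <;> simp [φ] <;> rfl
  rw [← this]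
  exact (φ y).2

variable {A}

open CartanMatrix in
/-- The universal property of the Serre presentation. -/
theorem exists_lift (S : SerreData A e f h) : ∃ φ : A.ToLieAlgebra ℂ →ₗ⁅ℂ⁆ L,
    (∀ i, φ (genE A i) = e i) ∧ ∀ i, φ (genF A i) = f i := by
  let ψ : FreeLieAlgebra ℂ (Generators ι) →ₗ⁅ℂ⁆ L :=
    FreeLieAlgebra.lift ℂ fun g => match g with
      | .H i => h i
      | .E i => e i
      | .F i => f i
  have hH : ∀ i, ψ (.of ℂ (.H i)) = h i := fun i => by simp [ψ]
  have hE : ∀ i, ψ (.of ℂ (.E i)) = e i := fun i => by simp [ψ]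
  have hF : ∀ i, ψ (.of ℂ (.F i)) = f i := fun i => by simp [ψ]
  have had : ∀ (x y : FreeLieAlgebra ℂ (Generators ι)) (n : ℕ),
      ψ (((LieAlgebra.ad ℂ _ x) ^ n) y) = ((LieAlgebra.ad ℂ _ (ψ x)) ^ n) (ψ y) := by
    intro x y n
    induction n with
    | zero => simp
    | succ n ih => simp [pow_succ', ih]
  have hker : Relations.toIdeal ℂ A ≤ ψ.ker := by
    refine LieSubmodule.lieSpan_le.mpr ?_
    intro x hx
    simp only [SetLike.mem_coe, LieHom.mem_ker]
    rcases hx with ((((⟨⟨i, j⟩, rfl⟩ | ⟨⟨i, j⟩, rfl⟩) | ⟨⟨i, j⟩, rfl⟩) | ⟨⟨i, j⟩, rfl⟩) |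
      ⟨⟨i, j⟩, rfl⟩) | ⟨⟨i, j⟩, rfl⟩
    · simp [Relations.HH, hH, S.hh]
    · by_cases hij : i = j
      · subst hij; simp [Relations.EF, hH, hE, hF, S.ef]
      · simp [Relations.EF, hE, hF, hij, S.ef_ne i j hij]
    · simp [Relations.HE, hH, hE, S.he, Int.cast_smul_eq_zsmul]
    · simp [Relations.HF, hH, hF, S.hf, Int.cast_smul_eq_zsmul]
    · simp only [Relations.adE, Function.uncurry, Function.comp, had, LieHom.map_lie, hE]
      exact S.ade i j
    · simp only [Relations.adF, Function.uncurry, Function.comp, had, LieHom.map_lie, hF]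
      exact S.adf i j
  let φ₀ : A.ToLieAlgebra ℂ →ₗ[ℂ] L :=
    (Relations.toIdeal ℂ A).toSubmodule.liftQ
      (ψ : FreeLieAlgebra ℂ (Generators ι) →ₗ[ℂ] L) (fun x hx => hker hx)
  have hφ : ∀ x, φ₀ (proj A x) = ψ x := fun x => rfl
  refine ⟨{ φ₀ with map_lie' := ?_ }, ?_, ?_⟩
  · intro x y
    obtain ⟨x, rfl⟩ := proj_surjective A x
    obtain ⟨y, rfl⟩ := proj_surjective A y
    change φ₀ ⁅proj A x, proj A y⁆ = ⁅φ₀ (proj A x), φ₀ (proj A y)⁆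
    rw [← LieHom.map_lie, hφ, hφ, hφ, LieHom.map_lie]
  · intro i; exact hE i
  · intro i; exact hF i

end Presentation

theorem Generates.hom_ext (g : Generates e f) {L' : Type*} [LieRing L'] [LieAlgebra ℂ L']
    {φ ψ : L →ₗ⁅ℂ⁆ L'} (he : ∀ i, φ (e i) = ψ (e i)) (hf : ∀ i, φ (f i) = ψ (f i)) (x : L) :
    φ x = ψ x :=
  g { LinearMap.eqLocus (φ : L →ₗ[ℂ] L') (ψ : L →ₗ[ℂ] L') with
      lie_mem' := fun {x y} hx hy => by
        change φ x = ψ x at hx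
        change φ y = ψ y at hy
        change φ ⁅x, y⁆ = ψ ⁅x, y⁆
        rw [LieHom.map_lie, LieHom.map_lie, hx, hy] } he hf x

end Serre

/-! ### Weight spaces of a Lie algebra with Serre generators -/


section Weights

variable {ι : Type*} {A : Matrix ι ι ℤ} {L : Type*} [LieRing L] [LieAlgebra ℂ L] {e f h : ι → L}

/-- The simultaneous eigenspace of the operators `ad (h i)` for the eigenvalues `χ i`. -/
def wtSpace (h : ι → L) (χ : ι → ℂ) : Submodule ℂ L where
  carrier := {x | ∀ i, ⁅h i, x⁆ = χ i • x}
  add_mem' {x y} hx hy i := by rw [lie_add, hx i, hy i, smul_add]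
  zero_mem' i := by simp
  smul_mem' c x hx i := by rw [lie_smul, hx i, smul_comm]

theorem mem_wtSpace {χ : ι → ℂ} {x : L} : x ∈ wtSpace h χ ↔ ∀ i, ⁅h i, x⁆ = χ i • x := Iff.rfl

theorem lie_mem_wtSpace {χ ψ : ι → ℂ} {x y : L} (hx : x ∈ wtSpace h χ) (hy : y ∈ wtSpace h ψ) :
    ⁅x, y⁆ ∈ wtSpace h (χ + ψ) := fun i => by
  rw [leibniz_lie, hx i, hy i, smul_lie, lie_smul, Pi.add_apply, add_smul]

theorem wtSpace_neg (χ : ι → ℂ) : wtSpace (-h) (-χ) = wtSpace h χ := by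
  ext x; simp only [mem_wtSpace, Pi.neg_apply, neg_lie, neg_smul, neg_inj]

/-- The generalised version of `wtSpace`. -/
noncomputable def genWt (h : ι → L) (χ : ι → ℂ) : Submodule ℂ L :=
  ⨅ i, (LieAlgebra.ad ℂ L (h i)).maxGenEigenspace (χ i)

theorem wtSpace_le_genWt (χ : ι → ℂ) : wtSpace h χ ≤ genWt h χ := by
  refine le_iInf fun i x hx => ?_
  refine (Module.End.mem_maxGenEigenspace _ _ _).mpr ⟨1, ?_⟩
  simpa [sub_eq_zero] using hx i

theorem SerreData.commute (S : SerreData A e f h) (i j : ι) :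
    Commute (LieAlgebra.ad ℂ L (h i)) (LieAlgebra.ad ℂ L (h j)) := by
  refine LinearMap.ext fun x => ?_
  simp only [Module.End.mul_apply, LieAlgebra.ad_apply]
  rw [leibniz_lie, S.hh, zero_lie, zero_add]

theorem SerreData.indep_genWt (S : SerreData A e f h) : iSupIndep (genWt h) :=
  Module.End.independent_iInf_maxGenEigenspace_of_forall_mapsTo _ fun i j =>
    Module.End.mapsTo_maxGenEigenspace_of_comm (S.commute j i)

theorem SerreData.indep_wtSpace (S : SerreData A e f h) : iSupIndep (wtSpace h) :=
  S.indep_genWt.mono wtSpace_le_genWt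

/-- If a family of subspaces spans and is contained in an independent one, they are equal. -/
theorem eq_of_le_of_iSupIndep {κ : Type*} {V G : κ → Submodule ℂ L} (hle : ∀ k, V k ≤ G k)
    (hind : iSupIndep G) (htop : ⨆ k, V k = ⊤) (k : κ) : V k = G k := by
  refine le_antisymm (hle k) fun x hx => ?_
  have hx' : x ∈ V k ⊔ ⨆ (j) (_ : j ≠ k), V j := by
    have : V k ⊔ ⨆ (j) (_ : j ≠ k), V j = ⊤ := by
      rw [eq_top_iff, ← htop]
      refine iSup_le fun j => ?_
      by_cases hj : j = k
      · subst hj; exact le_sup_left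
      · exact le_sup_of_le_right (le_iSup₂_of_le j hj le_rfl)
    rw [this]; trivial
  obtain ⟨a, ha, b, hb, rfl⟩ := Submodule.mem_sup.mp hx'
  have hbG : b ∈ G k := by simpa using Submodule.sub_mem _ hx (hle k ha)
  have hb' : b ∈ ⨆ (j) (_ : j ≠ k), G j :=
    (iSup₂_mono fun j _ => hle j : (⨆ (j) (_ : j ≠ k), V j) ≤ _) hb
  have : b = 0 := Submodule.disjoint_def.mp (hind k) b hbG hb'
  simpa [this] using ha

theorem SerreData.nil_e (S : SerreData A e f h) (g : Generates e f) (i : ι) (x : L) :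
    ∃ n : ℕ, ((LieAlgebra.ad ℂ L (e i)) ^ n) x = 0 := by
  rw [← LieSubalgebra.mem_engel_iff]
  refine g _ (fun j => ?_) (fun j => ?_) x
  · rw [LieSubalgebra.mem_engel_iff]
    exact ⟨(-A i j).toNat + 1, by rw [pow_succ, Module.End.mul_apply]; exact S.ade i j⟩
  · rw [LieSubalgebra.mem_engel_iff]
    by_cases hij : i = j
    · subst hij
      refine ⟨3, ?_⟩
      have : ⁅e i, h i⁆ = -((A i i : ℂ) • e i) := by rw [← lie_skew, S.he]
      simp [pow_succ, S.ef, this]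
    · exact ⟨1, by simpa using S.ef_ne i j hij⟩

theorem SerreData.ad_sl2 (S : SerreData A e f h) (hA : ∀ i, A i i = 2) (i : ι)
    (he : ∀ x, ∃ n : ℕ, ((LieAlgebra.ad ℂ L (e i)) ^ n) x = 0)
    (hf : ∀ x, ∃ n : ℕ, ((LieAlgebra.ad ℂ L (f i)) ^ n) x = 0) :
    Sl2Ops (LieAlgebra.ad ℂ L (e i)) (LieAlgebra.ad ℂ L (f i)) (LieAlgebra.ad ℂ L (h i)) where
  xy v := by simp only [LieAlgebra.ad_apply]; rw [leibniz_lie, S.ef, add_comm]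
  zx v := by
    simp only [LieAlgebra.ad_apply]; rw [leibniz_lie, S.he, hA, add_comm, smul_lie]; simp
  zy v := by
    simp only [LieAlgebra.ad_apply]
    rw [leibniz_lie, S.hf, hA, add_comm, smul_lie, neg_smul, sub_eq_add_neg]; simp
  nilx := he
  nily := hf

theorem SerreData.sl2 (S : SerreData A e f h) (g : Generates e f) (hA : ∀ i, A i i = 2) (i : ι) :
    Sl2Ops (LieAlgebra.ad ℂ L (e i)) (LieAlgebra.ad ℂ L (f i)) (LieAlgebra.ad ℂ L (h i)) :=
  S.ad_sl2 hA i (S.nil_e g i) (S.swap.nil_e g.swap i)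

theorem SerreData.e_mem (S : SerreData A e f h) (j : ι) :
    e j ∈ wtSpace h (fun i => (A i j : ℂ)) := fun i => S.he i j

theorem SerreData.f_mem (S : SerreData A e f h) (j : ι) :
    f j ∈ wtSpace h (fun i => -(A i j : ℂ)) := fun i => S.hf i j

/-- Iterated brackets `[e i₁, [e i₂, …]]` together with their multidegree. -/
inductive Word [DecidableEq ι] (e : ι → L) : (ι → ℤ) → L → Prop
  | base (i : ι) : Word e (Pi.single i 1) (e i)
  | step (i : ι) {k : ι → ℤ} {x : L} : Word e k x → Word e (Pi.single i 1 + k) ⁅e i, x⁆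

/-- The `h`-weight of the element `∑ k i • αᵢ` of the root lattice. -/
def rootWt [Fintype ι] (A : Matrix ι ι ℤ) (k : ι → ℤ) : ι → ℂ := fun i => (A.mulVec k i : ℂ)

section

variable [Fintype ι]

@[simp] theorem rootWt_add (k l : ι → ℤ) : rootWt A (k + l) = rootWt A k + rootWt A l := by
  ext; simp [rootWt, Matrix.mulVec_add]

@[simp] theorem rootWt_zero : rootWt A 0 = 0 := by ext; simp [rootWt]

@[simp] theorem rootWt_neg (k : ι → ℤ) : rootWt A (-k) = -rootWt A k := by
  ext; simp [rootWt, Matrix.mulVec_neg]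

variable [DecidableEq ι]

theorem rootWt_single (j : ι) : rootWt A (Pi.single j 1) = fun i => (A i j : ℂ) := by
  ext; simp [rootWt]

theorem rootWt_injective (hA : A.det ≠ 0) : Function.Injective (rootWt A) := by
  intro k l hkl
  have hu : IsUnit (A.map (Int.cast : ℤ → ℚ)) := by
    rw [Matrix.isUnit_iff_isUnit_det, isUnit_iff_ne_zero]
    have : (A.map (Int.cast : ℤ → ℚ)).det = (A.det : ℚ) := (Int.cast_det A).symm
    rw [this]; exact_mod_cast hA
  have := (Matrix.mulVec_injective_of_isUnit hu).eq_iff (a := fun i => (k i : ℚ))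
    (b := fun i => (l i : ℚ)) |>.mp ?_
  · ext i; exact_mod_cast congrFun this i
  · ext i
    have := congrFun hkl i
    simp only [rootWt, Int.cast_inj] at this
    have h2 : ((A.mulVec k i : ℤ) : ℚ) = ((A.mulVec l i : ℤ) : ℚ) := by rw [this]
    simpa [Matrix.mulVec, dotProduct] using h2

theorem Word.mem (S : SerreData A e f h) {k : ι → ℤ} {x : L} (w : Word e k x) :
    x ∈ wtSpace h (rootWt A k) := by
  induction w with
  | base i => rw [rootWt_single]; exact S.e_mem i
  | step i _ ih =>
    rw [rootWt_add, rootWt_single]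
    exact lie_mem_wtSpace (S.e_mem i) ih

theorem Word.nonneg {k : ι → ℤ} {x : L} (w : Word e k x) : 0 ≤ k := by
  induction w with
  | base i => exact Pi.single_nonneg.mpr zero_le_one
  | step i _ ih => exact add_nonneg (Pi.single_nonneg.mpr zero_le_one) ih

theorem Word.ne_zero {k : ι → ℤ} {x : L} (w : Word e k x) : k ≠ 0 := by
  cases w with
  | base i => intro h; simpa using congrFun h i
  | step i w =>
    intro h
    have h1 := congrFun h i
    have h2 := w.nonneg i
    simp at h1 h2
    omega

theorem Word.single {k : ι → ℤ} {x : L} (w : Word e k x) {i : ι} (hk : ∀ j, j ≠ i → k j = 0) :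
    (k i = 1 ∧ x = e i) ∨ x = 0 := by
  induction w with
  | base j =>
    by_cases hj : j = i
    · subst hj; simp
    · simpa using hk j hj
  | step j w ih =>
    have hj : j = i := by
      by_contra hj
      have h1 := hk j hj
      have h2 := w.nonneg j
      simp at h1 h2
      omega
    subst hj
    right
    rcases ih (fun l hl => by simpa [hl] using hk l hl) with ⟨_, h2⟩ | h2 <;> simp [h2]

theorem span_range_neg (h : ι → L) :
    Submodule.span ℂ (Set.range (-h)) = Submodule.span ℂ (Set.range h) := by
  rw [← Submodule.span_neg (Set.range h)]
  congr 1
  ext x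
  simp [Set.mem_range, neg_eq_iff_eq_neg]

theorem Word.lie_f (S : SerreData A e f h) (i : ι) {k : ι → ℤ} {x : L} (w : Word e k x) :
    ⁅f i, x⁆ ∈ Submodule.span ℂ {x | ∃ k, Word e k x} ⊔ Submodule.span ℂ (Set.range h) := by
  have key : ∀ j, ⁅f i, e j⁆ = if i = j then -h i else 0 := by
    intro j
    rw [← lie_skew]
    split_ifs with hij
    · subst hij; rw [S.ef]
    · rw [S.ef_ne j i (Ne.symm hij), neg_zero]
  induction w with
  | base j =>
    rw [key]
    split_ifs
    · exact Submodule.mem_sup_right (neg_mem (Submodule.subset_span ⟨i, rfl⟩))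
    · exact zero_mem _
  | @step j k x w ih =>
    rw [leibniz_lie, key]
    refine add_mem ?_ ?_
    · split_ifs
      · rw [neg_lie, w.mem S i]
        exact Submodule.mem_sup_left (neg_mem (Submodule.smul_mem _ _
          (Submodule.subset_span ⟨k, w⟩)))
      · simp
    · revert ih
      generalize ⁅f i, x⁆ = y
      intro hy
      have hle : Submodule.span ℂ {x | ∃ k, Word e k x} ⊔ Submodule.span ℂ (Set.range h) ≤
          (Submodule.span ℂ {x | ∃ k, Word e k x}).comap (LieAlgebra.ad ℂ L (e j)) := by
        refine sup_le (Submodule.span_le.mpr ?_) (Submodule.span_le.mpr ?_)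
        · rintro z ⟨l, hl⟩
          exact Submodule.subset_span ⟨_, hl.step j⟩
        · rintro _ ⟨l, rfl⟩
          simp only [Submodule.comap_coe, Set.mem_preimage, SetLike.mem_coe, LieAlgebra.ad_apply]
          rw [← lie_skew, S.he]
          exact neg_mem (Submodule.smul_mem _ _ (Submodule.subset_span ⟨_, .base j⟩))
      exact Submodule.mem_sup_left (hle hy)

/-- The sum `𝔫₊ + 𝔥` and its opposite span the Lie algebra. -/
theorem SerreData.triangular (S : SerreData A e f h) (g : Generates e f) :
    Submodule.span ℂ {x | ∃ k, Word e k x} ⊔ Submodule.span ℂ {x | ∃ k, Word f k x} ⊔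
      Submodule.span ℂ (Set.range h) = ⊤ := by
  have stepE : ∀ (e f h : ι → L), SerreData A e f h → ∀ i x,
      x ∈ Submodule.span ℂ {x | ∃ k, Word e k x} ⊔ Submodule.span ℂ {x | ∃ k, Word f k x} ⊔
        Submodule.span ℂ (Set.range h) → ⁅e i, x⁆ ∈ Submodule.span ℂ {x | ∃ k, Word e k x} ⊔
        Submodule.span ℂ {x | ∃ k, Word f k x} ⊔ Submodule.span ℂ (Set.range h) := by
    intro e f h S i
    suffices hle : Submodule.span ℂ {x | ∃ k, Word e k x} ⊔ Submodule.span ℂ {x | ∃ k, Word f k x} ⊔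
        Submodule.span ℂ (Set.range h) ≤ Submodule.comap (LieAlgebra.ad ℂ L (e i))
          (Submodule.span ℂ {x | ∃ k, Word e k x} ⊔ Submodule.span ℂ {x | ∃ k, Word f k x} ⊔
            Submodule.span ℂ (Set.range h)) from fun x hx => hle hx
    refine sup_le (sup_le (Submodule.span_le.mpr ?_) (Submodule.span_le.mpr ?_))
      (Submodule.span_le.mpr ?_)
    · rintro z ⟨l, hl⟩
      exact Submodule.mem_sup_left (Submodule.mem_sup_left
        (Submodule.subset_span ⟨_, hl.step i⟩))
    · rintro z ⟨l, hl⟩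
      have := hl.lie_f S.swap i
      rw [span_range_neg] at this
      simp only [Submodule.comap_coe, Set.mem_preimage, SetLike.mem_coe, LieAlgebra.ad_apply]
      refine SetLike.le_def.mp ?_ this
      exact sup_le (le_sup_of_le_left le_sup_right) le_sup_right
    · rintro _ ⟨l, rfl⟩
      simp only [Submodule.comap_coe, Set.mem_preimage, SetLike.mem_coe, LieAlgebra.ad_apply]
      rw [← lie_skew, S.he]
      exact Submodule.mem_sup_left (Submodule.mem_sup_left
        (neg_mem (Submodule.smul_mem _ _ (Submodule.subset_span ⟨_, .base i⟩))))
  set M := Submodule.span ℂ {x | ∃ k, Word e k x} ⊔ Submodule.span ℂ {x | ∃ k, Word f k x} ⊔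
      Submodule.span ℂ (Set.range h) with hM
  have hE := stepE e f h S
  have hF := stepE f e (-h) S.swap
  rw [span_range_neg, sup_comm (Submodule.span ℂ {x | ∃ k, Word f k x})] at hF
  rw [← hM] at hE hF
  have hstab : ∀ x : L, ∀ m ∈ M, ⁅x, m⁆ ∈ M :=
    g { carrier := {x | ∀ m ∈ M, ⁅x, m⁆ ∈ M}
        add_mem' := fun {x y} hx hy m hm => by rw [add_lie]; exact add_mem (hx m hm) (hy m hm)
        zero_mem' := fun m _ => by simp
        smul_mem' := fun c x hx m hm => by rw [smul_lie]; exact M.smul_mem c (hx m hm)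
        lie_mem' := fun {x y} hx hy m hm => by
          rw [lie_lie]; exact sub_mem (hx _ (hy m hm)) (hy _ (hx m hm)) } hE hF
  rw [eq_top_iff]
  intro x _
  refine g { M with lie_mem' := fun {x y} _ hy => hstab x y hy } (fun i => ?_) (fun i => ?_) x
  · exact Submodule.mem_sup_left (Submodule.mem_sup_left (Submodule.subset_span ⟨_, .base i⟩))
  · exact Submodule.mem_sup_left (Submodule.mem_sup_right (Submodule.subset_span ⟨_, .base i⟩))

/-- The subspace of degree `k` spanned by the words and the `h i`. -/
def degSpace (e f h : ι → L) (k : ι → ℤ) : Submodule ℂ L :=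
  Submodule.span ℂ {x | Word e k x ∨ Word f (-k) x ∨ (k = 0 ∧ ∃ i, x = h i)}

theorem SerreData.degSpace_le (S : SerreData A e f h) (k : ι → ℤ) :
    degSpace e f h k ≤ wtSpace h (rootWt A k) := by
  refine Submodule.span_le.mpr ?_
  rintro x (w | w | ⟨rfl, i, rfl⟩)
  · exact w.mem S
  · have := w.mem S.swap
    rwa [rootWt_neg, wtSpace_neg] at this
  · intro j; simp [S.hh]

theorem SerreData.iSup_degSpace (S : SerreData A e f h) (g : Generates e f) :
    ⨆ k, degSpace e f h k = ⊤ := by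
  rw [eq_top_iff, ← S.triangular g]
  refine sup_le (sup_le (Submodule.span_le.mpr ?_) (Submodule.span_le.mpr ?_))
    (Submodule.span_le.mpr ?_)
  · rintro x ⟨k, w⟩
    exact Submodule.mem_iSup_of_mem k (Submodule.subset_span (Or.inl w))
  · rintro x ⟨k, w⟩
    exact Submodule.mem_iSup_of_mem (-k) (Submodule.subset_span (Or.inr (Or.inl (by simpa using w))))
  · rintro _ ⟨i, rfl⟩
    exact Submodule.mem_iSup_of_mem 0 (Submodule.subset_span (Or.inr (Or.inr ⟨rfl, i, rfl⟩)))

theorem SerreData.degSpace_eq (S : SerreData A e f h) (g : Generates e f) (hA : A.det ≠ 0)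
    (k : ι → ℤ) : degSpace e f h k = wtSpace h (rootWt A k) :=
  eq_of_le_of_iSupIndep S.degSpace_le (S.indep_wtSpace.comp (rootWt_injective hA))
    (S.iSup_degSpace g) k

/-- Every weight lies in the root lattice. -/
theorem SerreData.exists_rootWt (S : SerreData A e f h) (g : Generates e f) {χ : ι → ℂ}
    (hχ : wtSpace h χ ≠ ⊥) : ∃ k, χ = rootWt A k := by
  by_contra! hne
  refine hχ (eq_bot_iff.mpr fun x hx => ?_)
  refine Submodule.disjoint_def.mp (S.indep_wtSpace χ) x hx ?_
  have h1 : (⨆ k, degSpace e f h k) ≤ ⨆ (ψ) (_ : ψ ≠ χ), wtSpace h ψ :=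
    iSup_le fun k => (S.degSpace_le k).trans (le_iSup₂_of_le (rootWt A k) (hne k).symm le_rfl)
  rw [S.iSup_degSpace g] at h1
  exact h1 trivial

theorem SerreData.wtSpace_zero (S : SerreData A e f h) (g : Generates e f) (hA : A.det ≠ 0) :
    wtSpace h 0 = Submodule.span ℂ (Set.range h) := by
  rw [← rootWt_zero (A := A), ← S.degSpace_eq g hA]
  refine le_antisymm (Submodule.span_le.mpr ?_) (Submodule.span_mono ?_)
  · rintro x (w | w | ⟨-, i, rfl⟩)
    · exact absurd rfl w.ne_zero
    · exact absurd (by simp) w.ne_zero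
    · exact Submodule.subset_span ⟨i, rfl⟩
  · rintro _ ⟨i, rfl⟩
    exact Or.inr (Or.inr ⟨rfl, i, rfl⟩)

theorem SerreData.sign (S : SerreData A e f h) (g : Generates e f) (hA : A.det ≠ 0)
    {k : ι → ℤ} (hk : wtSpace h (rootWt A k) ≠ ⊥) : 0 ≤ k ∨ k ≤ 0 := by
  by_contra! hc
  rw [← S.degSpace_eq g hA] at hk
  refine hk (Submodule.span_eq_bot.mpr ?_)
  rintro x (w | w | ⟨rfl, -⟩)
  · exact absurd w.nonneg hc.1
  · exact absurd (neg_nonneg.mp w.nonneg) hc.2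
  · exact absurd le_rfl hc.1

/-- The only weight that is a positive multiple of `αᵢ` is `αᵢ` itself, and it is simple. -/
theorem SerreData.wtSpace_single (S : SerreData A e f h) (g : Generates e f) (hA : A.det ≠ 0)
    {k : ι → ℤ} {i : ι} (hk : ∀ j, j ≠ i → k j = 0) (hi : 0 < k i) :
    wtSpace h (rootWt A k) ≤ Submodule.span ℂ {e i} ∧
      (wtSpace h (rootWt A k) ≠ ⊥ → k = Pi.single i 1) := by
  rw [← S.degSpace_eq g hA]
  have key : ∀ x ∈ {x | Word e k x ∨ Word f (-k) x ∨ (k = 0 ∧ ∃ i, x = h i)},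
      (k i = 1 ∧ x = e i) ∨ x = 0 := by
    rintro x (w | w | ⟨rfl, -⟩)
    · exact w.single hk
    · have := w.nonneg i
      simp at this; omega
    · simp at hi
  constructor
  · refine Submodule.span_le.mpr fun x hx => ?_
    rcases key x hx with ⟨-, rfl⟩ | rfl
    · exact Submodule.mem_span_singleton_self _
    · exact zero_mem _
  · intro hne
    by_contra hk1
    refine hne (Submodule.span_eq_bot.mpr fun x hx => (key x hx).resolve_left fun hx => hk1 ?_)
    ext j
    by_cases hj : j = i
    · subst hj; simp [hx.1]
    · simp [hj, hk j hj]

end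

end Weights

/-! ### Reflection orbits of integral weights -/

section Orbits

/-- The reflection `sᵢ` on integral weights, in the coordinates `λ ↦ (⟨λ, hⱼ⟩)ⱼ`. -/
def reflW {ι : Type*} (A : Matrix ι ι ℤ) (i : ι) (w : ι → ℤ) : ι → ℤ :=
  fun j => w j - w i * A j i

/-- The integral weight with a given list of coordinates. -/
def vec {n : ℕ} (l : List ℤ) : Fin n → ℤ := fun i => l.getD i 0

/-- The list of coordinates of the reflection of a weight. -/
def reflL {n : ℕ} (A : Matrix (Fin n) (Fin n) ℤ) (i : Fin n) (l : List ℤ) : List ℤ :=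
  List.ofFn (reflW A i (vec l))

@[simp] theorem vec_ofFn {n : ℕ} (w : Fin n → ℤ) : vec (List.ofFn w) = w := by
  ext i; simp [vec]

theorem vec_reflL {n : ℕ} (A : Matrix (Fin n) (Fin n) ℤ) (i : Fin n) (l : List ℤ) :
    vec (reflL A i l) = reflW A i (vec l) := vec_ofFn _

/-- The reflections of a weight that lower it. -/
def lower {n : ℕ} (A : Matrix (Fin n) (Fin n) ℤ) (l : List ℤ) : List (List ℤ) :=
  ((List.finRange n).filter fun i => 0 < (vec l : Fin n → ℤ) i).map fun i => reflL A i l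

/-- The weights obtained from those in a list by at most `d` successive lowering reflections. -/
def orb {n : ℕ} (A : Matrix (Fin n) (Fin n) ℤ) : ℕ → List (List ℤ) → List (List ℤ)
  | 0, L => L
  | d + 1, L => L ++ orb A d ((L.flatMap (lower A)).dedup)

theorem orb_induction {n : ℕ} {A : Matrix (Fin n) (Fin n) ℤ} {Q : (Fin n → ℤ) → Prop}
    (hQ : ∀ w i, Q w → 0 < w i → Q (reflW A i w)) (d : ℕ) :
    ∀ L : List (List ℤ), (∀ l ∈ L, Q (vec l)) → ∀ l ∈ orb A d L, Q (vec l) := by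
  induction d with
  | zero => exact fun L h => h
  | succ d ih =>
    intro L hL l hl
    rcases List.mem_append.mp hl with h | h
    · exact hL l h
    · refine ih _ (fun l' hl' => ?_) l h
      simp only [List.mem_dedup, List.mem_flatMap, lower, List.mem_map, List.mem_filter,
        decide_eq_true_eq] at hl'
      obtain ⟨l'', h1, i, ⟨-, h2⟩, rfl⟩ := hl'
      rw [vec_reflL]
      exact hQ _ _ (hL _ h1) h2

end Orbits

/-! ### Reflections acting on weight spaces -/

section Reflections

variable {ι : Type*} {A : Matrix ι ι ℤ} {L : Type*} [LieRing L] [LieAlgebra ℂ L] {e f h : ι → L}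

/-- An integral weight, viewed as a complex one. -/
def castW (w : ι → ℤ) : ι → ℂ := fun i => (w i : ℂ)

theorem castW_injective : Function.Injective (castW : (ι → ℤ) → ι → ℂ) := fun a b hab => by
  ext i; exact Int.cast_injective (congrFun hab i)

@[simp] theorem castW_neg (w : ι → ℤ) : castW (-w) = -castW w := by ext; simp [castW]

@[simp] theorem castW_zero : castW (0 : ι → ℤ) = 0 := by ext; simp [castW]

theorem rootWt_eq [Fintype ι] (k : ι → ℤ) : rootWt A k = castW (A.mulVec k) := rfl

theorem pow_ad_mem {χ ψ : ι → ℂ} {x y : L} (hx : x ∈ wtSpace h χ) (hy : y ∈ wtSpace h ψ) (n : ℕ) :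
    ((LieAlgebra.ad ℂ L y) ^ n) x ∈ wtSpace h (χ + n • ψ) := by
  induction n with
  | zero => simpa using hx
  | succ n ih =>
    rw [pow_succ', Module.End.mul_apply, LieAlgebra.ad_apply, succ_nsmul, ← add_assoc,
      add_comm _ ψ]
    exact lie_mem_wtSpace hy ih

theorem pow_ad_mem_ideal (I : LieIdeal ℂ L) {x : L} (hx : x ∈ I) (y : L) (n : ℕ) :
    ((LieAlgebra.ad ℂ L y) ^ n) x ∈ I := by
  induction n with
  | zero => simpa using hx
  | succ n ih =>
    rw [pow_succ', Module.End.mul_apply]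
    exact lie_mem_right ℂ L I _ _ ih

theorem castW_reflW_of_nonneg (i : ι) {w : ι → ℤ} (hw : 0 ≤ w i) :
    castW (reflW A i w) = castW w + (w i).toNat • fun j => -(A j i : ℂ) := by
  ext j
  have : (((w i).toNat : ℤ) : ℂ) = (w i : ℂ) := by rw [Int.toNat_of_nonneg hw]
  simp only [castW, reflW, Pi.add_apply, Pi.smul_apply]
  rw [nsmul_eq_mul]
  push_cast at this ⊢
  rw [this]; ring

theorem castW_reflW_of_nonpos (i : ι) {w : ι → ℤ} (hw : w i ≤ 0) :
    castW (reflW A i w) = castW w + (-w i).toNat • fun j => (A j i : ℂ) := by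
  ext j
  have : (((-w i).toNat : ℤ) : ℂ) = ((-w i : ℤ) : ℂ) := by rw [Int.toNat_of_nonneg (by omega)]
  simp only [castW, reflW, Pi.add_apply, Pi.smul_apply]
  rw [nsmul_eq_mul]
  push_cast at this ⊢
  rw [this]; ring

/-- A power of `ad (f i)` or of `ad (e i)` maps the weight space of `w` injectively into the weight
space of `sᵢ w`; this operator preserves all ideals. -/
theorem SerreData.exists_refl (S : SerreData A e f h)
    (s : ∀ i, Sl2Ops (LieAlgebra.ad ℂ L (e i)) (LieAlgebra.ad ℂ L (f i)) (LieAlgebra.ad ℂ L (h i)))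
    (w : ι → ℤ) (i : ι) : ∃ T : End ℂ L,
      (∀ x ∈ wtSpace h (castW w), T x ∈ wtSpace h (castW (reflW A i w)) ∧ (T x = 0 → x = 0)) ∧
      ∀ I : LieIdeal ℂ L, ∀ x ∈ I, T x ∈ I := by
  rcases le_total 0 (w i) with hw | hw
  · refine ⟨(LieAlgebra.ad ℂ L (f i)) ^ (w i).toNat, fun x hx => ⟨?_, fun h0 => ?_⟩,
      fun I x hx => pow_ad_mem_ideal I hx _ _⟩
    · rw [castW_reflW_of_nonneg i hw]
      exact pow_ad_mem hx (S.f_mem i) _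
    · by_contra hne
      refine (s i).pow_y_ne (w i).toNat le_rfl ?_ hne h0
      have : (((w i).toNat : ℤ) : ℂ) = (w i : ℂ) := by rw [Int.toNat_of_nonneg hw]
      push_cast at this
      rw [this]; exact hx i
  · refine ⟨(LieAlgebra.ad ℂ L (e i)) ^ (-w i).toNat, fun x hx => ⟨?_, fun h0 => ?_⟩,
      fun I x hx => pow_ad_mem_ideal I hx _ _⟩
    · rw [castW_reflW_of_nonpos i hw]
      exact pow_ad_mem hx (S.e_mem i) _
    · by_contra hne
      refine (s i).pow_x_ne (-w i).toNat le_rfl ?_ hne h0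
      have : (((-w i).toNat : ℤ) : ℂ) = ((-w i : ℤ) : ℂ) := by
        rw [Int.toNat_of_nonneg (by omega)]
      push_cast at this
      rw [this, neg_neg]; exact hx i

variable [Fintype ι] [DecidableEq ι]

theorem mulVec_sub_single (k : ι → ℤ) (i : ι) :
    A.mulVec (k - Pi.single i (A.mulVec k i)) = reflW A i (A.mulVec k) := by
  ext j
  rw [Matrix.mulVec_sub, Pi.sub_apply, Matrix.mulVec_single]
  simp [reflW, mul_comm]

/-- The condition on `A` saying that a positive element of the root lattice has a simple root in
its support with which it pairs positively; it follows from positive definiteness. -/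
def PosDef' (A : Matrix ι ι ℤ) : Prop :=
  ∀ k : ι → ℤ, 0 ≤ k → k ≠ 0 → ∃ i, 0 < k i ∧ 0 < A.mulVec k i

/-- Every positive weight is reached from a simple root by reflections. -/
theorem SerreData.pos_induction (S : SerreData A e f h) (g : Generates e f) (hA : A.det ≠ 0)
    (hA2 : ∀ i, A i i = 2) (hpd : PosDef' A) {Q : (ι → ℤ) → Prop}
    (h1 : ∀ i, Q (A.mulVec (Pi.single i 1)))
    (h2 : ∀ w i, Q (reflW A i w) → Q w)
    (k : ι → ℤ) (hk : 0 ≤ k) (hk0 : k ≠ 0) (hwt : wtSpace h (castW (A.mulVec k)) ≠ ⊥) :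
    Q (A.mulVec k) := by
  generalize hN : (∑ i, k i).toNat = N
  induction N using Nat.strong_induction_on generalizing k with
  | _ N ih =>
  obtain ⟨i, hi, hAi⟩ := hpd k hk hk0
  by_cases hsup : ∀ j, j ≠ i → k j = 0
  · rw [(S.wtSpace_single g hA hsup hi).2 hwt]
    exact h1 i
  push Not at hsup
  obtain ⟨j, hji, hkj⟩ := hsup
  have hkj' : 0 < k j := lt_of_le_of_ne (hk j) hkj.symm
  set k' := k - Pi.single i (A.mulVec k i) with hk'
  have hk'j : k' j = k j := by simp [hk', hji]
  have hwt' : wtSpace h (castW (A.mulVec k')) ≠ ⊥ := by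
    rw [mulVec_sub_single]
    obtain ⟨T, hT, -⟩ := S.exists_refl (S.sl2 g hA2) (A.mulVec k) i
    obtain ⟨x, hx, hx0⟩ := Submodule.exists_mem_ne_zero_of_ne_bot hwt
    intro hb
    have := (hT x hx).1
    rw [hb, Submodule.mem_bot] at this
    exact hx0 ((hT x hx).2 this)
  have hpos : 0 ≤ k' := by
    rcases S.sign g hA hwt' with h | h
    · exact h
    · exact absurd (h j) (by rw [hk'j]; simpa using hkj')
  refine h2 _ i ?_
  rw [← mulVec_sub_single]
  refine ih _ ?_ k' hpos (fun h0 => ?_) hwt' rfl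
  · have hsum : ∑ l, k' l = ∑ l, k l - A.mulVec k i := by
      simp [hk', Finset.sum_sub_distrib]
    have hge : 0 ≤ ∑ l, k' l := Finset.sum_nonneg fun l _ => hpos l
    omega
  · rw [h0] at hk'j; simp at hk'j; omega

theorem span_range_h_finrank (h : ι → L) : Module.Finite ℂ (Submodule.span ℂ (Set.range h)) ∧
    finrank ℂ (Submodule.span ℂ (Set.range h)) ≤ Fintype.card ι :=
  ⟨FiniteDimensional.span_of_finite ℂ (Set.finite_range h), finrank_range_le_card h⟩

/-- A weight is zero, or positive, or negative; in the nonzero case its weight space is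
at most one-dimensional and it lies in each set of weights which is stable under reflections and
contains the simple roots and their opposites. -/
theorem SerreData.weights (S : SerreData A e f h) (g : Generates e f) (hA : A.det ≠ 0)
    (hA2 : ∀ i, A i i = 2) (hpd : PosDef' A) {R : (ι → ℤ) → Prop}
    (h1 : ∀ i, R (A.mulVec (Pi.single i 1))) (h1' : ∀ i, R (-A.mulVec (Pi.single i 1)))
    (h2 : ∀ w i, R (reflW A i w) → R w)
    (k : ι → ℤ) (hk0 : k ≠ 0) (hwt : wtSpace h (castW (A.mulVec k)) ≠ ⊥) :
    R (A.mulVec k) ∧ Module.Finite ℂ (wtSpace h (castW (A.mulVec k))) ∧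
      finrank ℂ (wtSpace h (castW (A.mulVec k))) ≤ 1 := by
  have key : ∀ (e f h : ι → L), SerreData A e f h → Generates e f → ∀ R : (ι → ℤ) → Prop,
    (∀ i, R (A.mulVec (Pi.single i 1))) → (∀ w i, R (reflW A i w) → R w) → ∀ k, 0 ≤ k → k ≠ 0 →
    wtSpace h (castW (A.mulVec k)) ≠ ⊥ → R (A.mulVec k) ∧
      Module.Finite ℂ (wtSpace h (castW (A.mulVec k))) ∧
      finrank ℂ (wtSpace h (castW (A.mulVec k))) ≤ 1 := by
    intro e f h S g R h1 h2 k hk hk0 hwt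
    refine S.pos_induction g hA hA2 hpd (Q := fun w => R w ∧ Module.Finite ℂ (wtSpace h (castW w)) ∧
      finrank ℂ (wtSpace h (castW w)) ≤ 1) (fun i => ⟨h1 i, ?_⟩) (fun w i hw => ⟨h2 w i hw.1, ?_⟩)
      k hk hk0 hwt
    · have hle := (S.wtSpace_single g hA (k := Pi.single i 1) (i := i)
        (fun j hj => by simp [hj]) (by simp)).1
      rw [rootWt_eq] at hle
      have hfin : Module.Finite ℂ (Submodule.span ℂ {e i}) := inferInstance
      exact ⟨Submodule.finiteDimensional_of_le hle,
        (Submodule.finrank_mono hle).trans ((finrank_span_le_card _).trans (by simp))⟩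
    · obtain ⟨-, hfin, hrk⟩ := hw
      obtain ⟨T, hT, -⟩ := S.exists_refl (S.sl2 g hA2) w i
      let T' := T.restrict (p := wtSpace h (castW w)) (q := wtSpace h (castW (reflW A i w)))
        fun x hx => (hT x hx).1
      have hinj : Function.Injective T' := by
        rw [injective_iff_map_eq_zero]
        intro x hx
        exact Subtype.ext ((hT x x.2).2 (congrArg Subtype.val hx))
      exact ⟨Module.Finite.of_injective T' hinj,
        (LinearMap.finrank_le_finrank_of_injective hinj).trans hrk⟩
  rcases S.sign g hA hwt with hk | hk
  · exact key e f h S g R h1 h2 k hk hk0 hwt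
  · have hneg : wtSpace (-h) (castW (A.mulVec (-k))) = wtSpace h (castW (A.mulVec k)) := by
      rw [Matrix.mulVec_neg, castW_neg, wtSpace_neg]
    have := key f e (-h) S.swap g.swap (fun w => R (-w)) h1' (fun w i hw => h2 _ i ?_) (-k)
      (neg_nonneg.mpr hk) (neg_ne_zero.mpr hk0) (by rwa [hneg])
    · rw [hneg] at this
      simpa [Matrix.mulVec_neg] using this
    · convert hw using 1
      ext j; simp [reflW]; ring

theorem SerreData.iSup_wtSpace (S : SerreData A e f h) (g : Generates e f) :
    ⨆ k : ι → ℤ, wtSpace h (castW (A.mulVec k)) = ⊤ := by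
  rw [eq_top_iff, ← S.iSup_degSpace g]
  exact iSup_mono S.degSpace_le

/-- Finite dimensionality, with a bound by the number of elements of a set of roots. -/
theorem SerreData.finite (S : SerreData A e f h) (g : Generates e f) (hA : A.det ≠ 0)
    (hA2 : ∀ i, A i i = 2) (hpd : PosDef' A) (R : Finset (ι → ℤ))
    (h1 : ∀ i, A.mulVec (Pi.single i 1) ∈ R) (h1' : ∀ i, -A.mulVec (Pi.single i 1) ∈ R)
    (h2 : ∀ w i, reflW A i w ∈ R → w ∈ R) :
    Module.Finite ℂ L ∧ finrank ℂ L ≤ Fintype.card ι + R.card := by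
  have hw := S.weights g hA hA2 hpd (R := (· ∈ R)) h1 h1' h2
  classical
  let R' := R.filter fun w => ∃ k, k ≠ 0 ∧ w = A.mulVec k
  have htop : wtSpace h 0 ⊔ R'.sup (fun w => wtSpace h (castW w)) = ⊤ := by
    rw [eq_top_iff, ← S.iSup_wtSpace g]
    refine iSup_le fun k => ?_
    by_cases hk : k = 0
    · subst hk; simp
    · by_cases hb : wtSpace h (castW (A.mulVec k)) = ⊥
      · rw [hb]; exact bot_le
      · refine le_sup_of_le_right (Finset.le_sup (f := fun w => wtSpace h (castW w)) ?_)
        exact Finset.mem_filter.mpr ⟨(hw k hk hb).1, k, hk, rfl⟩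
  have hR' : ∀ w ∈ R', Module.Finite ℂ (wtSpace h (castW w)) ∧
      finrank ℂ (wtSpace h (castW w)) ≤ 1 := by
    intro w hwR
    obtain ⟨-, k, hk, rfl⟩ := Finset.mem_filter.mp hwR
    by_cases hb : wtSpace h (castW (A.mulVec k)) = ⊥
    · rw [hb]; exact ⟨inferInstance, by simp⟩
    · exact (hw k hk hb).2
  have hsup : ∀ s : Finset (ι → ℤ), s ⊆ R' →
      Module.Finite ℂ (s.sup fun w => wtSpace h (castW w) : Submodule ℂ L) ∧
      finrank ℂ (s.sup fun w => wtSpace h (castW w) : Submodule ℂ L) ≤ s.card := by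
    intro s
    induction s using Finset.induction_on with
    | empty => intro _; exact ⟨by rw [Finset.sup_empty]; infer_instance, by rw [Finset.sup_empty]; simp⟩
    | insert a s ha ih =>
      intro hs
      obtain ⟨i1, i2⟩ := ih fun x hx => hs (Finset.mem_insert_of_mem hx)
      obtain ⟨j1, j2⟩ := hR' a (hs (Finset.mem_insert_self _ _))
      rw [Finset.sup_insert, Finset.card_insert_of_notMem ha]
      refine ⟨inferInstance, (Submodule.finrank_add_le_finrank_add_finrank _ _).trans ?_⟩
      omega
  obtain ⟨s1, s2⟩ := hsup R' subset_rfl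
  obtain ⟨t1, t2⟩ := span_range_h_finrank h
  rw [← S.wtSpace_zero g hA] at t1 t2
  have hfin : Module.Finite ℂ (⊤ : Submodule ℂ L) := by rw [← htop]; infer_instance
  refine ⟨Module.finite_def.mpr (Module.Finite.iff_fg.mp hfin), ?_⟩
  rw [← finrank_top, ← htop]
  refine (Submodule.finrank_add_le_finrank_add_finrank _ _).trans ?_
  have : R'.card ≤ R.card := Finset.card_filter_le _ _
  omega

end Reflections

/-! ### Ideals and simplicity -/

section Simple

variable {ι : Type*} {A : Matrix ι ι ℤ} {L : Type*} [LieRing L] [LieAlgebra ℂ L] {e f h : ι → L}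

/-- Subspaces stable under a commuting family of operators contain simultaneous eigenvectors. -/
theorem exists_wtVec [FiniteDimensional ℂ L] [Finite ι] (hh : ∀ i j, ⁅h i, h j⁆ = 0)
    (W : Submodule ℂ L) (hW : W ≠ ⊥) (hst : ∀ i, ∀ x ∈ W, ⁅h i, x⁆ ∈ W) :
    ∃ χ, ∃ x ∈ W, x ≠ 0 ∧ x ∈ wtSpace h χ := by
  classical
  have := Fintype.ofFinite ι
  suffices H : ∀ s : Finset ι, ∃ W' ≤ W, W' ≠ ⊥ ∧ (∀ i, ∀ x ∈ W', ⁅h i, x⁆ ∈ W') ∧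
      ∃ χ : ι → ℂ, ∀ i ∈ s, ∀ x ∈ W', ⁅h i, x⁆ = χ i • x by
    obtain ⟨W', hle, hne, -, χ, hχ⟩ := H Finset.univ
    obtain ⟨x, hx, hx0⟩ := Submodule.exists_mem_ne_zero_of_ne_bot hne
    exact ⟨χ, x, hle hx, hx0, fun i => hχ i (Finset.mem_univ i) x hx⟩
  intro s
  induction s using Finset.induction_on with
  | empty => exact ⟨W, le_rfl, hW, hst, 0, by simp⟩
  | insert i s _ ih =>
    obtain ⟨W', hle, hne, hst', χ, hχ⟩ := ih
    let T : End ℂ W' := (LieAlgebra.ad ℂ L (h i)).restrict fun x hx => hst' i x hx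
    have : Nontrivial W' := Submodule.nontrivial_iff_ne_bot.mpr hne
    obtain ⟨μ, hμ⟩ := Module.End.exists_eigenvalue T
    obtain ⟨v, hv⟩ := hμ.exists_hasEigenvector
    let E : Submodule ℂ L := W' ⊓ (LieAlgebra.ad ℂ L (h i)).eigenspace μ
    have hE : ∀ x, x ∈ E ↔ x ∈ W' ∧ ⁅h i, x⁆ = μ • x := fun x => by
      simp [E]
    refine ⟨E, inf_le_left.trans hle, ?_, ?_, Function.update χ i μ, ?_⟩
    · refine (Submodule.ne_bot_iff _).mpr ⟨v, (hE v).mpr ⟨v.2, ?_⟩, by simpa using hv.2⟩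
      exact congrArg Subtype.val hv.apply_eq_smul
    · intro j x hx
      rw [hE] at hx ⊢
      refine ⟨hst' j x hx.1, ?_⟩
      rw [leibniz_lie, hh, zero_lie, zero_add, hx.2, lie_smul]
    · intro j hj x hx
      rw [hE] at hx
      by_cases hji : j = i
      · subst hji; simpa using hx.2
      · rw [Function.update_of_ne hji]
        exact hχ j (Finset.mem_of_mem_insert_of_ne hj hji) x hx.1

/-- The Dynkin diagram of `A` is connected. -/
def Conn (A : Matrix ι ι ℤ) : Prop :=
  ∀ P : ι → Prop, (∃ i, P i) → (∀ i j, A i j ≠ 0 → P i → P j) → ∀ i, P i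

theorem SerreData.eq_top_of_h_mem (S : SerreData A e f h) (g : Generates e f)
    (hA2 : ∀ i, A i i = 2) (hc : Conn A) (I : LieIdeal ℂ L) {i : ι} (hi : h i ∈ I) : I = ⊤ := by
  have hall : ∀ i, h i ∈ I := by
    refine hc (fun i => h i ∈ I) ⟨i, hi⟩ fun i j hij hi => ?_
    have h1 : (A i j : ℂ) • e j ∈ I := by
      rw [← S.he]; exact lie_mem_left ℂ L I _ _ hi
    have h2 : e j ∈ I := by
      have := I.smul_mem (A i j : ℂ)⁻¹ h1
      rwa [inv_smul_smul₀ (by exact_mod_cast hij)] at this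
    change h j ∈ I
    rw [← S.ef]; exact lie_mem_left ℂ L I _ _ h2
  have hE : ∀ i, e i ∈ I := fun i => by
    have h1 : (A i i : ℂ) • e i ∈ I := by
      rw [← S.he]; exact lie_mem_left ℂ L I _ _ (hall i)
    have := I.smul_mem (A i i : ℂ)⁻¹ h1
    rwa [inv_smul_smul₀ (by simp [hA2])] at this
  have hF : ∀ i, f i ∈ I := fun i => by
    have h1 : (-(A i i : ℂ)) • f i ∈ I := by
      rw [← S.hf]; exact lie_mem_left ℂ L I _ _ (hall i)
    have := I.smul_mem (-(A i i : ℂ))⁻¹ h1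
    rwa [inv_smul_smul₀ (by simp [hA2])] at this
  refine eq_top_iff.mpr fun x _ => ?_
  exact g { I.toSubmodule with lie_mem' := fun {x y} _ hy => lie_mem_right ℂ L I _ _ hy } hE hF x

theorem SerreData.eq_top_of_e_mem (S : SerreData A e f h) (g : Generates e f)
    (hA2 : ∀ i, A i i = 2) (hc : Conn A) (I : LieIdeal ℂ L) {i : ι} (hi : e i ∈ I) : I = ⊤ := by
  refine S.eq_top_of_h_mem g hA2 hc I (i := i) ?_
  rw [← S.ef]; exact lie_mem_left ℂ L I _ _ hi

theorem SerreData.e_ne_zero [Nontrivial L] (S : SerreData A e f h) (g : Generates e f)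
    (hA2 : ∀ i, A i i = 2) (hc : Conn A) (i : ι) : e i ≠ 0 := by
  intro h0
  have h1 := S.eq_top_of_e_mem g hA2 hc ⊥ (i := i) (by simp [h0])
  obtain ⟨x, hx⟩ := exists_ne (0 : L)
  exact hx ((LieSubmodule.mem_bot x).mp (h1 ▸ LieSubmodule.mem_top x))

theorem SerreData.h_ne_zero [Nontrivial L] (S : SerreData A e f h) (g : Generates e f)
    (hA2 : ∀ i, A i i = 2) (hc : Conn A) (i : ι) : h i ≠ 0 := by
  intro h0
  have h1 := S.eq_top_of_h_mem g hA2 hc ⊥ (i := i) (by simp [h0])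
  obtain ⟨x, hx⟩ := exists_ne (0 : L)
  exact hx ((LieSubmodule.mem_bot x).mp (h1 ▸ LieSubmodule.mem_top x))

variable [Fintype ι] [DecidableEq ι]

/-- A combination of the `h i` that commutes with all `e j` has zero coefficients. -/
theorem SerreData.coeff_eq_zero (S : SerreData A e f h) (hA : A.det ≠ 0) (he : ∀ i, e i ≠ 0)
    (c : ι → ℂ) (hc : ∀ j, ⁅∑ i, c i • h i, e j⁆ = 0) : c = 0 := by
  have hdet : (A.map (Int.cast : ℤ → ℂ)).det ≠ 0 := by
    have : (A.map (Int.cast : ℤ → ℂ)).det = (A.det : ℂ) := (Int.cast_det A).symm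
    rw [this]; exact_mod_cast hA
  refine Matrix.eq_zero_of_vecMul_eq_zero hdet ?_
  ext j
  have h1 := hc j
  simp only [sum_lie, smul_lie, S.he, smul_smul, ← Finset.sum_smul] at h1
  simpa [Matrix.vecMul, dotProduct] using (smul_eq_zero.mp h1).resolve_right (he j)

theorem SerreData.ideal_eq_top [Nontrivial L] [FiniteDimensional ℂ L] (S : SerreData A e f h)
    (g : Generates e f) (hA : A.det ≠ 0)
    (hA2 : ∀ i, A i i = 2) (hpd : PosDef' A) (hc : Conn A) (I : LieIdeal ℂ L) (hI : I ≠ ⊥) :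
    I = ⊤ := by
  obtain ⟨χ, x, hxI, hx0, hx⟩ := exists_wtVec S.hh I.toSubmodule (by simpa using hI)
    fun i x hx => lie_mem_right ℂ L I _ _ hx
  obtain ⟨k, rfl⟩ := S.exists_rootWt g (χ := χ) (fun hb => hx0 (by rw [hb] at hx; simpa using hx))
  have key : ∀ (e f h : ι → L), SerreData A e f h → Generates e f → ∀ k, 0 ≤ k → k ≠ 0 →
      x ∈ wtSpace h (castW (A.mulVec k)) → ∃ i, e i ∈ I := by
    intro e f h S g k hk hk0 hx
    refine S.pos_induction g hA hA2 hpd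
      (Q := fun w => ∀ x ∈ I, x ∈ wtSpace h (castW w) → x ≠ 0 → ∃ i, e i ∈ I) ?_ ?_ k hk hk0
      (fun hb => hx0 (by rw [hb] at hx; simpa using hx)) x hxI hx hx0
    · intro i x hxI hx hx0
      have hle := (S.wtSpace_single g hA (k := Pi.single i 1) (i := i)
        (fun j hj => by simp [hj]) (by simp)).1
      obtain ⟨c, rfl⟩ := Submodule.mem_span_singleton.mp (hle hx)
      have hc0 : c ≠ 0 := fun h => hx0 (by simp [h])
      have := I.smul_mem c⁻¹ hxI
      rw [inv_smul_smul₀ hc0] at this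
      exact ⟨i, this⟩
    · intro w i ih x hxI hx hx0
      obtain ⟨T, hT, hTI⟩ := S.exists_refl (S.sl2 g hA2) w i
      exact ih (T x) (hTI I x hxI) (hT x hx).1 fun h0 => hx0 ((hT x hx).2 h0)
  by_cases hk : k = 0
  · subst hk
    rw [rootWt_zero, S.wtSpace_zero g hA] at hx
    obtain ⟨c, rfl⟩ := (Submodule.mem_span_range_iff_exists_fun ℂ).mp hx
    have hne : ∃ j, ⁅∑ i, c i • h i, e j⁆ ≠ 0 := by
      by_contra! hz
      have := S.coeff_eq_zero hA (S.e_ne_zero g hA2 hc) c hz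
      exact hx0 (by simp [this])
    obtain ⟨j, hj⟩ := hne
    have h1 : ⁅∑ i, c i • h i, e j⁆ ∈ I := lie_mem_left ℂ L I _ _ hxI
    have h2 : ⁅∑ i, c i • h i, e j⁆ = (∑ i, c i * (A i j : ℂ)) • e j := by
      simp only [sum_lie, smul_lie, S.he, smul_smul, ← Finset.sum_smul]
    rw [h2] at h1 hj
    have h3 : (∑ i, c i * (A i j : ℂ)) ≠ 0 := fun h => hj (by rw [h, zero_smul])
    have := I.smul_mem (∑ i, c i * (A i j : ℂ))⁻¹ h1
    rw [inv_smul_smul₀ h3] at this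
    exact S.eq_top_of_e_mem g hA2 hc I this
  · have hwt : wtSpace h (rootWt A k) ≠ ⊥ := fun hb => hx0 (by rw [hb] at hx; simpa using hx)
    rcases S.sign g hA hwt with hk' | hk'
    · obtain ⟨i, hi⟩ := key e f h S g k hk' hk hx
      exact S.eq_top_of_e_mem g hA2 hc I hi
    · obtain ⟨i, hi⟩ := key f e (-h) S.swap g.swap (-k) (neg_nonneg.mpr hk') (neg_ne_zero.mpr hk)
        (by rw [Matrix.mulVec_neg, castW_neg, wtSpace_neg]; exact hx)
      exact S.swap.eq_top_of_e_mem g.swap hA2 hc I hi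

theorem SerreData.isKilling [Nontrivial L] [FiniteDimensional ℂ L] [Nonempty ι]
    (S : SerreData A e f h) (g : Generates e f) (hA : A.det ≠ 0)
    (hA2 : ∀ i, A i i = 2) (hpd : PosDef' A) (hc : Conn A) : LieAlgebra.IsKilling ℂ L := by
  have hs : LieAlgebra.IsSimple ℂ L :=
    { eq_bot_or_eq_top := fun I => or_iff_not_imp_left.mpr (S.ideal_eq_top g hA hA2 hpd hc I)
      non_abelian := fun hab => by
        obtain ⟨i⟩ := ‹Nonempty ι›
        have h1 := S.he i i
        rw [hab.trivial, hA2] at h1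
        exact S.e_ne_zero g hA2 hc i (by simpa using h1.symm) }
  infer_instance

/-- The dimensions of independent subspaces add up to at most the total dimension. -/
theorem sum_finrank_le [FiniteDimensional ℂ L] {κ : Type*} {V : κ → Submodule ℂ L}
    (hV : iSupIndep V) (s : Finset κ) : ∑ k ∈ s, finrank ℂ (V k) ≤ finrank ℂ L := by
  classical
  have H : ∀ s : Finset κ, ∑ k ∈ s, finrank ℂ (V k) = finrank ℂ (s.sup V : Submodule ℂ L) := by
    intro s
    induction s using Finset.induction_on with
    | empty => rw [Finset.sup_empty]; simp
    | insert a s ha ih =>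
      rw [Finset.sum_insert ha, Finset.sup_insert, ih, ← Submodule.finrank_sup_add_finrank_inf_eq]
      have : Disjoint (V a) (s.sup V) :=
        (hV a).mono_right (Finset.sup_le fun k hk =>
          le_iSup₂_of_le k (by rintro rfl; exact ha hk) le_rfl)
      rw [this.eq_bot, finrank_bot, add_zero]
  rw [H]
  exact Submodule.finrank_le _

end Simple

/-! ### The Cartan matrices `E₆` and `E₇` -/

section Exceptional

/-- Positive definiteness of the `E₇` form, by completing squares along the Dynkin diagram. -/
theorem form_nonpos {a b c d x y z : ℤ} (h : a ^ 2 + b ^ 2 + c ^ 2 + d ^ 2 + x ^ 2 + y ^ 2 + z ^ 2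
    - a * c - b * d - c * d - d * x - x * y - y * z ≤ 0) :
    a = 0 ∧ b = 0 ∧ c = 0 ∧ d = 0 ∧ x = 0 ∧ y = 0 ∧ z = 0 := by
  have key : 6 * (2 * a - c) ^ 2 + 2 * (3 * c - 2 * d) ^ 2 + 6 * (2 * b - d) ^ 2 +
      6 * (2 * z - y) ^ 2 + 2 * (3 * y - 2 * x) ^ 2 + (4 * x - 3 * d) ^ 2 + d ^ 2 ≤ 0 := by
    linarith
  have sq : ∀ t : ℤ, t ^ 2 ≤ 0 → t = 0 := fun t ht => by
    have := le_antisymm ht (sq_nonneg t)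
    exact pow_eq_zero_iff (two_ne_zero) |>.mp this
  have p1 := sq_nonneg (2 * a - c)
  have p2 := sq_nonneg (3 * c - 2 * d)
  have p3 := sq_nonneg (2 * b - d)
  have p4 := sq_nonneg (2 * z - y)
  have p5 := sq_nonneg (3 * y - 2 * x)
  have p6 := sq_nonneg (4 * x - 3 * d)
  have p7 := sq_nonneg d
  have q1 := sq (2 * a - c) (by linarith)
  have q2 := sq (3 * c - 2 * d) (by linarith)
  have q3 := sq (2 * b - d) (by linarith)
  have q4 := sq (2 * z - y) (by linarith)
  have q5 := sq (3 * y - 2 * x) (by linarith)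
  have q6 := sq (4 * x - 3 * d) (by linarith)
  have q7 := sq d (by linarith)
  omega

theorem posDef'_of_form {n : ℕ} {A : Matrix (Fin n) (Fin n) ℤ}
    (hA : ∀ k : Fin n → ℤ, ∑ i, k i * A.mulVec k i ≤ 0 → k = 0) : PosDef' A := by
  intro k hk hk0
  by_contra! hc
  refine hk0 (hA k (Finset.sum_nonpos fun i _ => ?_))
  rcases (hk i).lt_or_eq with hi | hi
  · exact mul_nonpos_of_nonneg_of_nonpos hi.le (hc i hi)
  · rw [← hi]; simp

theorem posDef_E₇ : PosDef' E₇ := by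
  refine posDef'_of_form fun k hk => ?_
  have : k 0 ^ 2 + k 1 ^ 2 + k 2 ^ 2 + k 3 ^ 2 + k 4 ^ 2 + k 5 ^ 2 + k 6 ^ 2
      - k 0 * k 2 - k 1 * k 3 - k 2 * k 3 - k 3 * k 4 - k 4 * k 5 - k 5 * k 6 ≤ 0 := by
    simp [Fin.sum_univ_succ, E₇, Matrix.mulVec, dotProduct, Matrix.of_apply] at hk
    linarith
  obtain ⟨h0, h1, h2, h3, h4, h5, h6⟩ := form_nonpos this
  ext i; fin_cases i <;> assumption

theorem posDef_E₆ : PosDef' E₆ := by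
  refine posDef'_of_form fun k hk => ?_
  have : k 0 ^ 2 + k 1 ^ 2 + k 2 ^ 2 + k 3 ^ 2 + k 4 ^ 2 + k 5 ^ 2 + 0 ^ 2
      - k 0 * k 2 - k 1 * k 3 - k 2 * k 3 - k 3 * k 4 - k 4 * k 5 - k 5 * 0 ≤ 0 := by
    simp [Fin.sum_univ_succ, E₆, Matrix.mulVec, dotProduct, Matrix.of_apply] at hk
    linarith
  obtain ⟨h0, h1, h2, h3, h4, h5, -⟩ := form_nonpos this
  ext i; fin_cases i <;> assumption

theorem conn_E₇ : Conn E₇ := by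
  intro P ⟨i, hi⟩ hs
  have h02 := hs 0 2 (by decide)
  have h20 := hs 2 0 (by decide)
  have h13 := hs 1 3 (by decide)
  have h31 := hs 3 1 (by decide)
  have h23 := hs 2 3 (by decide)
  have h32 := hs 3 2 (by decide)
  have h34 := hs 3 4 (by decide)
  have h43 := hs 4 3 (by decide)
  have h45 := hs 4 5 (by decide)
  have h54 := hs 5 4 (by decide)
  have h56 := hs 5 6 (by decide)
  have h65 := hs 6 5 (by decide)
  have h3 : P 3 := by
    fin_cases i
    exacts [h23 (h02 hi), h13 hi, h23 hi, hi, h43 hi, h43 (h54 hi), h43 (h54 (h65 hi))]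
  intro j
  fin_cases j
  exacts [h20 (h32 h3), h31 h3, h32 h3, h3, h34 h3, h45 (h34 h3), h56 (h45 (h34 h3))]

theorem conn_E₆ : Conn E₆ := by
  intro P ⟨i, hi⟩ hs
  have h02 := hs 0 2 (by decide)
  have h20 := hs 2 0 (by decide)
  have h13 := hs 1 3 (by decide)
  have h31 := hs 3 1 (by decide)
  have h23 := hs 2 3 (by decide)
  have h32 := hs 3 2 (by decide)
  have h34 := hs 3 4 (by decide)
  have h43 := hs 4 3 (by decide)
  have h45 := hs 4 5 (by decide)
  have h54 := hs 5 4 (by decide)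
  have h3 : P 3 := by
    fin_cases i
    exacts [h23 (h02 hi), h13 hi, h23 hi, hi, h43 hi, h43 (h54 hi)]
  intro j
  fin_cases j
  exacts [h20 (h32 h3), h31 h3, h32 h3, h3, h34 h3, h45 (h34 h3)]

/-- The roots of `E₆`, starting from the highest one. -/
def rts6 : List (List ℤ) := orb E₆ 21 [[0, 1, 0, 0, 0, 0]]
/-- The roots of `E₇`, starting from the highest one. -/
def rts7 : List (List ℤ) := orb E₇ 33 [[1, 0, 0, 0, 0, 0, 0]]

set_option maxRecDepth 100000 in
theorem rts7_closed : ∀ l ∈ rts7, ∀ i, reflL E₇ i l ∈ rts7 := by decide +kernel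
set_option maxRecDepth 100000 in
theorem rts7_simple : ∀ i : Fin 7, List.ofFn (E₇.mulVec (Pi.single i 1)) ∈ rts7 ∧
    List.ofFn (-E₇.mulVec (Pi.single i 1)) ∈ rts7 := by decide +kernel
set_option maxRecDepth 100000 in
theorem rts7_length : rts7.length = 126 ∧ rts7.Nodup ∧ ∀ l ∈ rts7, l.length = 7 := by
  decide +kernel
set_option maxRecDepth 100000 in
theorem rts6_closed : ∀ l ∈ rts6, ∀ i, reflL E₆ i l ∈ rts6 := by decide +kernel
set_option maxRecDepth 100000 in
theorem rts6_simple : ∀ i : Fin 6, List.ofFn (E₆.mulVec (Pi.single i 1)) ∈ rts6 ∧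
    List.ofFn (-E₆.mulVec (Pi.single i 1)) ∈ rts6 := by decide +kernel
set_option maxRecDepth 100000 in
theorem rts6_length : rts6.length = 72 ∧ rts6.Nodup ∧ ∀ l ∈ rts6, l.length = 6 := by
  decide +kernel

/-- The set of weights listed in a list of coordinate lists. -/
def wset {n : ℕ} (L : List (List ℤ)) : Finset (Fin n → ℤ) := (L.map vec).toFinset

theorem mem_wset {n : ℕ} {L : List (List ℤ)} {w : Fin n → ℤ} :
    w ∈ wset L ↔ ∃ l ∈ L, vec l = w := by simp [wset]

theorem mem_wset_of_ofFn {n : ℕ} {L : List (List ℤ)} {w : Fin n → ℤ} (h : List.ofFn w ∈ L) :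
    w ∈ wset L := mem_wset.mpr ⟨_, h, vec_ofFn w⟩

theorem card_wset_le {n : ℕ} (L : List (List ℤ)) : (wset (n := n) L).card ≤ L.length :=
  (List.toFinset_card_le _).trans (by simp)

theorem vec_injOn {n : ℕ} {l l' : List ℤ} (hl : l.length = n) (hl' : l'.length = n)
    (h : (vec l : Fin n → ℤ) = vec l') : l = l' := by
  refine List.ext_getElem (hl.trans hl'.symm) fun i h1 h2 => ?_
  have := congrFun h ⟨i, hl ▸ h1⟩
  simpa [vec, h1, h2] using this

theorem card_wset {n : ℕ} {L : List (List ℤ)} (hnd : L.Nodup) (hlen : ∀ l ∈ L, l.length = n) :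
    (wset (n := n) L).card = L.length := by
  rw [wset, List.toFinset_card_of_nodup, List.length_map]
  exact hnd.map_on fun l hl l' hl' h => vec_injOn (hlen l hl) (hlen l' hl') h

theorem reflW_reflW {ι : Type*} {A : Matrix ι ι ℤ} (hA2 : ∀ i, A i i = 2) (i : ι) (w : ι → ℤ) :
    reflW A i (reflW A i w) = w := by
  ext j; simp [reflW, hA2]; ring

theorem wset_closed {n : ℕ} {A : Matrix (Fin n) (Fin n) ℤ} (hA2 : ∀ i, A i i = 2)
    {L : List (List ℤ)} (hL : ∀ l ∈ L, ∀ i, reflL A i l ∈ L) (w : Fin n → ℤ) (i : Fin n)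
    (hw : reflW A i w ∈ wset L) : w ∈ wset L := by
  obtain ⟨l, hl, hlw⟩ := mem_wset.mp hw
  refine mem_wset.mpr ⟨_, hL l hl i, ?_⟩
  rw [vec_reflL, hlw, reflW_reflW hA2]

theorem finite_e₇ : Module.Finite ℂ (LieAlgebra.e₇ ℂ) ∧ finrank ℂ (LieAlgebra.e₇ ℂ) ≤ 133 := by
  have := (serreData_gen E₇).finite (generates_gen E₇) (by rw [E₇_det]; norm_num) E₇_diag
    posDef_E₇ (wset rts7) (fun i => mem_wset_of_ofFn (rts7_simple i).1)
    (fun i => mem_wset_of_ofFn (rts7_simple i).2) (wset_closed E₇_diag rts7_closed)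
  refine ⟨this.1, this.2.trans ?_⟩
  have h2 := card_wset_le (n := 7) rts7
  rw [rts7_length.1] at h2
  simp only [Fintype.card_fin]; omega

theorem finite_e₆ : Module.Finite ℂ (LieAlgebra.e₆ ℂ) ∧ finrank ℂ (LieAlgebra.e₆ ℂ) ≤ 78 := by
  have := (serreData_gen E₆).finite (generates_gen E₆) (by rw [E₆_det]; norm_num) E₆_diag
    posDef_E₆ (wset rts6) (fun i => mem_wset_of_ofFn (rts6_simple i).1)
    (fun i => mem_wset_of_ofFn (rts6_simple i).2) (wset_closed E₆_diag rts6_closed)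
  refine ⟨this.1, this.2.trans ?_⟩
  have h2 := card_wset_le (n := 6) rts6
  rw [rts6_length.1] at h2
  simp only [Fintype.card_fin]; omega

instance : FiniteDimensional ℂ (LieAlgebra.e₇ ℂ) := finite_e₇.1
instance : FiniteDimensional ℂ (LieAlgebra.e₆ ℂ) := finite_e₆.1

theorem isKilling_e₇ [Nontrivial (LieAlgebra.e₇ ℂ)] : LieAlgebra.IsKilling ℂ (LieAlgebra.e₇ ℂ) :=
  (serreData_gen E₇).isKilling (generates_gen E₇) (by rw [E₇_det]; norm_num) E₇_diag
    posDef_E₇ conn_E₇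

theorem ideal_e₇ [Nontrivial (LieAlgebra.e₇ ℂ)] (I : LieIdeal ℂ (LieAlgebra.e₇ ℂ)) (hI : I ≠ ⊥) :
    I = ⊤ :=
  (serreData_gen E₇).ideal_eq_top (generates_gen E₇) (by rw [E₇_det]; norm_num) E₇_diag
    posDef_E₇ conn_E₇ I hI

theorem lt_finrank_e₇ [Nontrivial (LieAlgebra.e₇ ℂ)] : 78 < finrank ℂ (LieAlgebra.e₇ ℂ) := by
  have S := serreData_gen E₇
  have g := generates_gen E₇
  -- if one root were not a weight, then no root would be, in particular not `α₀`
  have hwt : ∀ l ∈ rts7, wtSpace (genH E₇) (castW (vec l)) ≠ ⊥ := by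
    have hstep : ∀ w i, wtSpace (genH E₇) (castW w) ≠ ⊥ →
        wtSpace (genH E₇) (castW (reflW E₇ i w)) ≠ ⊥ := by
      intro w i hw hb
      obtain ⟨T, hT, -⟩ := S.exists_refl (S.sl2 g E₇_diag) w i
      obtain ⟨x, hx, hx0⟩ := Submodule.exists_mem_ne_zero_of_ne_bot hw
      have := (hT x hx).1
      rw [hb, Submodule.mem_bot] at this
      exact hx0 ((hT x hx).2 this)
    refine orb_induction (fun w i hw _ => hstep w i hw) 33 _ ?_
    by_contra hc
    simp only [List.mem_singleton, forall_eq, not_not] at hc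
    have hall := orb_induction (A := E₇) (Q := fun w => wtSpace (genH E₇) (castW w) = ⊥)
      (fun w i hw _ => by
        by_contra hb
        have := hstep _ i hb
        rw [reflW_reflW E₇_diag] at this
        exact this hw) 33 [[1, 0, 0, 0, 0, 0, 0]] (by simpa using hc) _ (rts7_simple 0).1
    rw [vec_ofFn, ← rootWt_eq, rootWt_single] at hall
    have := S.e_mem 0
    rw [hall, Submodule.mem_bot] at this
    exact S.e_ne_zero g E₇_diag conn_E₇ 0 this
  have hsum := sum_finrank_le (S.indep_wtSpace.comp castW_injective) (wset rts7)
  have hge : (wset (n := 7) rts7).card ≤ ∑ w ∈ wset rts7,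
      finrank ℂ ((wtSpace (genH E₇) ∘ castW) w) := by
    rw [Finset.card_eq_sum_ones]
    refine Finset.sum_le_sum fun w hw => ?_
    obtain ⟨l, hl, rfl⟩ := mem_wset.mp hw
    exact Submodule.one_le_finrank_iff.mpr (hwt l hl)
  rw [card_wset rts7_length.2.1 rts7_length.2.2, rts7_length.1] at hge
  have : (126 : ℕ) ≤ finrank ℂ (LieAlgebra.e₇ ℂ) := hge.trans hsum
  omega

end Exceptional

/-! ### Generalised weight spaces for a semisimple subalgebra -/

section GenWeights

variable {ι : Type*} {A : Matrix ι ι ℤ} {L : Type*} [LieRing L] [LieAlgebra ℂ L] {e f h : ι → L}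

theorem mem_genWt {χ : ι → ℂ} {x : L} : x ∈ genWt h χ ↔
    ∀ i, x ∈ (LieAlgebra.ad ℂ L (h i)).maxGenEigenspace (χ i) := by
  simp [genWt, Submodule.mem_iInf]

theorem lie_mem_genWt {χ ψ : ι → ℂ} {x y : L} (hx : x ∈ genWt h χ) (hy : y ∈ genWt h ψ) :
    ⁅x, y⁆ ∈ genWt h (χ + ψ) :=
  mem_genWt.mpr fun i =>
    LieModule.lie_mem_maxGenEigenspace_toEnd (mem_genWt.mp hx i) (mem_genWt.mp hy i)

theorem SerreData.h_mem (S : SerreData A e f h) (j : ι) : h j ∈ wtSpace h 0 := fun i => by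
  simp [S.hh]

theorem SerreData.lie_h_mem (S : SerreData A e f h) {χ : ι → ℂ} {x : L} (hx : x ∈ genWt h χ)
    (j : ι) : ⁅h j, x⁆ ∈ genWt h χ := by
  have := lie_mem_genWt (wtSpace_le_genWt _ (S.h_mem j)) hx
  rwa [zero_add] at this

variable [FiniteDimensional ℂ L]

/-- In finite dimension the Serre generators act through `sl₂`-triples without any generation
hypothesis. -/
theorem SerreData.sl2' (S : SerreData A e f h) (hA2 : ∀ i, A i i = 2) (i : ι) :
    Sl2Ops (LieAlgebra.ad ℂ L (e i)) (LieAlgebra.ad ℂ L (f i)) (LieAlgebra.ad ℂ L (h i)) := by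
  refine S.ad_sl2 hA2 i (fun x => ?_) (fun x => ?_)
  · obtain ⟨n, hn⟩ := Sl2Ops.isNilpotent_of_lie (X := LieAlgebra.ad ℂ L (e i))
      (Z := LieAlgebra.ad ℂ L (h i)) (c := 2) two_ne_zero fun v => by
        simp only [LieAlgebra.ad_apply]; rw [leibniz_lie, S.he, hA2, add_comm, smul_lie]; simp
    exact ⟨n, by rw [hn]; rfl⟩
  · obtain ⟨n, hn⟩ := Sl2Ops.isNilpotent_of_lie (X := LieAlgebra.ad ℂ L (f i))
      (Z := LieAlgebra.ad ℂ L (h i)) (c := -2) (by norm_num) fun v => by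
        simp only [LieAlgebra.ad_apply]
        rw [leibniz_lie, S.hf, hA2, add_comm, smul_lie]; simp
    exact ⟨n, by rw [hn]; rfl⟩

theorem SerreData.iSup_genWt (S : SerreData A e f h) : ⨆ χ, genWt h χ = ⊤ :=
  Module.End.iSup_iInf_maxGenEigenspace_eq_top_of_iSup_maxGenEigenspace_eq_top_of_commute _
    (fun i j _ => S.commute i j) fun _ => Module.End.iSup_maxGenEigenspace_eq_top _

variable [Finite ι]

theorem SerreData.exists_wtVec (S : SerreData A e f h) {χ : ι → ℂ} {W : Submodule ℂ L}
    (hle : W ≤ genWt h χ) (hW : W ≠ ⊥) (hst : ∀ i, ∀ x ∈ W, ⁅h i, x⁆ ∈ W) :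
    ∃ x ∈ W, x ≠ 0 ∧ x ∈ wtSpace h χ := by
  obtain ⟨ψ, x, hxW, hx0, hx⟩ := E6E7.exists_wtVec S.hh W hW hst
  by_cases hψ : ψ = χ
  · exact ⟨x, hxW, hx0, hψ ▸ hx⟩
  · refine absurd (Submodule.disjoint_def.mp (S.indep_genWt χ) x (hle hxW) ?_) hx0
    exact (le_iSup₂_of_le ψ hψ le_rfl : genWt h ψ ≤ _) (wtSpace_le_genWt ψ hx)

theorem SerreData.exists_wtVec' (S : SerreData A e f h) {χ : ι → ℂ} (hχ : genWt h χ ≠ ⊥) :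
    ∃ x ≠ 0, x ∈ wtSpace h χ := by
  obtain ⟨x, -, h1, h2⟩ := S.exists_wtVec le_rfl hχ fun i x hx => S.lie_h_mem hx i
  exact ⟨x, h1, h2⟩

theorem SerreData.integral (S : SerreData A e f h) (hA2 : ∀ i, A i i = 2) {χ : ι → ℂ}
    (hχ : genWt h χ ≠ ⊥) : ∃ w, χ = castW w := by
  obtain ⟨x, hx0, hx⟩ := S.exists_wtVec' hχ
  choose w hw using fun i => (S.sl2' hA2 i).weight_int (hx i) hx0
  exact ⟨w, funext hw⟩

theorem SerreData.iSup_genWt' (S : SerreData A e f h) (hA2 : ∀ i, A i i = 2) :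
    ⨆ w : ι → ℤ, genWt h (castW w) = ⊤ := by
  rw [eq_top_iff, ← S.iSup_genWt]
  refine iSup_le fun χ => ?_
  by_cases hχ : genWt h χ = ⊥
  · rw [hχ]; exact bot_le
  · obtain ⟨w, rfl⟩ := S.integral hA2 hχ
    exact le_iSup (fun w : ι → ℤ => genWt h (castW w)) w

theorem pow_ad_mem_genWt {χ ψ : ι → ℂ} {x y : L} (hx : x ∈ genWt h χ) (hy : y ∈ genWt h ψ)
    (n : ℕ) : ((LieAlgebra.ad ℂ L y) ^ n) x ∈ genWt h (χ + n • ψ) := by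
  induction n with
  | zero => simpa using hx
  | succ n ih =>
    rw [pow_succ', Module.End.mul_apply, LieAlgebra.ad_apply, succ_nsmul, ← add_assoc,
      add_comm _ ψ]
    exact lie_mem_genWt hy ih

theorem lie_pow_ad {ψ : ι → ℂ} {y : L} (hy : y ∈ wtSpace h ψ) (j : ι) (n : ℕ) (x : L) :
    ((LieAlgebra.ad ℂ L y) ^ n) ⁅h j, x⁆ =
      ⁅h j, ((LieAlgebra.ad ℂ L y) ^ n) x⁆ - (n * ψ j) • ((LieAlgebra.ad ℂ L y) ^ n) x := by
  induction n with
  | zero => simp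
  | succ n ih =>
    rw [pow_succ', Module.End.mul_apply, ih, Module.End.mul_apply]
    simp only [LieAlgebra.ad_apply]
    rw [lie_sub, leibniz_lie y, ← lie_skew y (h j), hy j, neg_lie, smul_lie, lie_smul]
    push_cast
    module

/-- Injectivity of a power of `ad y` on a weight space extends to the generalised weight space. -/
theorem SerreData.inj_genWt (S : SerreData A e f h) {χ ψ : ι → ℂ} {y : L} (hy : y ∈ wtSpace h ψ)
    {n : ℕ} (hinj : ∀ x ∈ wtSpace h χ, ((LieAlgebra.ad ℂ L y) ^ n) x = 0 → x = 0)
    {x : L} (hx : x ∈ genWt h χ) (h0 : ((LieAlgebra.ad ℂ L y) ^ n) x = 0) : x = 0 := by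
  by_contra hne
  let W : Submodule ℂ L := genWt h χ ⊓ LinearMap.ker ((LieAlgebra.ad ℂ L y) ^ n)
  obtain ⟨z, hz, hz0, hz'⟩ := S.exists_wtVec (χ := χ) (W := W) inf_le_left
    ((Submodule.ne_bot_iff _).mpr ⟨x, ⟨hx, h0⟩, hne⟩) (fun i x hx => by
      refine ⟨S.lie_h_mem hx.1 i, ?_⟩
      have h0 : ((LieAlgebra.ad ℂ L y) ^ n) x = 0 := hx.2
      change ((LieAlgebra.ad ℂ L y) ^ n) ⁅h i, x⁆ = 0
      rw [lie_pow_ad hy, h0]; simp)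
  exact hz0 (hinj z hz' hz.2)

theorem pow_ad_mem_sub (K : LieSubalgebra ℂ L) {x y : L} (hx : x ∈ K) (hy : y ∈ K) (n : ℕ) :
    ((LieAlgebra.ad ℂ L y) ^ n) x ∈ K := by
  induction n with
  | zero => simpa using hx
  | succ n ih =>
    rw [pow_succ', Module.End.mul_apply]
    exact K.lie_mem hy ih

/-- The analogue of `SerreData.exists_refl` for generalised weight spaces. -/
theorem SerreData.exists_refl' (S : SerreData A e f h) (hA2 : ∀ i, A i i = 2)
    (w : ι → ℤ) (i : ι) : ∃ T : End ℂ L,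
      (∀ x ∈ genWt h (castW w), T x ∈ genWt h (castW (reflW A i w)) ∧ (T x = 0 → x = 0)) ∧
      ∀ K : LieSubalgebra ℂ L, e i ∈ K → f i ∈ K → ∀ x ∈ K, T x ∈ K := by
  rcases le_total 0 (w i) with hw | hw
  · refine ⟨(LieAlgebra.ad ℂ L (f i)) ^ (w i).toNat, fun x hx => ⟨?_, ?_⟩,
      fun K _ hf x hx => pow_ad_mem_sub K hx hf _⟩
    · rw [castW_reflW_of_nonneg i hw]
      exact pow_ad_mem_genWt hx (wtSpace_le_genWt _ (S.f_mem i)) _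
    · refine S.inj_genWt (S.f_mem i) (fun x hx h0 => ?_) hx
      by_contra hne
      refine (S.sl2' hA2 i).pow_y_ne (w i).toNat le_rfl ?_ hne h0
      have : (((w i).toNat : ℤ) : ℂ) = (w i : ℂ) := by rw [Int.toNat_of_nonneg hw]
      push_cast at this
      rw [this]; exact hx i
  · refine ⟨(LieAlgebra.ad ℂ L (e i)) ^ (-w i).toNat, fun x hx => ⟨?_, ?_⟩,
      fun K he _ x hx => pow_ad_mem_sub K hx he _⟩
    · rw [castW_reflW_of_nonpos i hw]
      exact pow_ad_mem_genWt hx (wtSpace_le_genWt _ (S.e_mem i)) _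
    · refine S.inj_genWt (S.e_mem i) (fun x hx h0 => ?_) hx
      by_contra hne
      refine (S.sl2' hA2 i).pow_x_ne (-w i).toNat le_rfl ?_ hne h0
      have : (((-w i).toNat : ℤ) : ℂ) = ((-w i : ℤ) : ℂ) := by
        rw [Int.toNat_of_nonneg (by omega)]
      push_cast at this
      rw [this, neg_neg]; exact hx i

/-- The multiplicity of an integral weight. -/
noncomputable def mult (h : ι → L) (w : ι → ℤ) : ℕ := finrank ℂ (genWt h (castW w))

theorem mult_ne_zero {w : ι → ℤ} : mult h w ≠ 0 ↔ genWt h (castW w) ≠ ⊥ := by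
  rw [mult, Ne, Submodule.finrank_eq_zero]

theorem mult_ne_zero_of_mem {w : ι → ℤ} {x : L} (hx : x ∈ genWt h (castW w)) (hx0 : x ≠ 0) :
    mult h w ≠ 0 := mult_ne_zero.mpr ((Submodule.ne_bot_iff _).mpr ⟨x, hx, hx0⟩)

theorem eq_zero_of_mult {w : ι → ℤ} {x : L} (hw : mult h w = 0) (hx : x ∈ genWt h (castW w)) :
    x = 0 := by
  by_contra h0
  exact mult_ne_zero_of_mem hx h0 hw

theorem SerreData.mult_refl_le (S : SerreData A e f h) (hA2 : ∀ i, A i i = 2)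
    (w : ι → ℤ) (i : ι) : mult h w ≤ mult h (reflW A i w) := by
  obtain ⟨T, hT, -⟩ := S.exists_refl' hA2 w i
  let T' := T.restrict (p := genWt h (castW w)) (q := genWt h (castW (reflW A i w)))
    fun x hx => (hT x hx).1
  refine LinearMap.finrank_le_finrank_of_injective (f := T') ?_
  rw [injective_iff_map_eq_zero]
  intro x hx
  exact Subtype.ext ((hT x x.2).2 (congrArg Subtype.val hx))

theorem SerreData.mult_refl (S : SerreData A e f h) (hA2 : ∀ i, A i i = 2)
    (w : ι → ℤ) (i : ι) : mult h (reflW A i w) = mult h w := by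
  refine le_antisymm ?_ (S.mult_refl_le hA2 w i)
  have := S.mult_refl_le hA2 (reflW A i w) i
  rwa [reflW_reflW hA2] at this

/-- If the subalgebra `K` contains `e i`, `f i` and the generalised weight space of `w`, then it
contains that of `sᵢ w`. -/
theorem SerreData.genWt_refl_le (S : SerreData A e f h) (hA2 : ∀ i, A i i = 2)
    (w : ι → ℤ) (i : ι) (K : LieSubalgebra ℂ L) (he : e i ∈ K) (hf : f i ∈ K)
    (hw : genWt h (castW w) ≤ K.toSubmodule) :
    genWt h (castW (reflW A i w)) ≤ K.toSubmodule := by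
  obtain ⟨T, hT, hTK⟩ := S.exists_refl' hA2 w i
  let T' := T.restrict (p := genWt h (castW w)) (q := genWt h (castW (reflW A i w)))
    fun x hx => (hT x hx).1
  have hinj : Function.Injective T' := by
    rw [injective_iff_map_eq_zero]
    intro x hx
    exact Subtype.ext ((hT x x.2).2 (congrArg Subtype.val hx))
  have hsurj := (LinearMap.injective_iff_surjective_of_finrank_eq_finrank (f := T')
    (S.mult_refl hA2 w i).symm).mp hinj
  intro y hy
  obtain ⟨x, hx⟩ := hsurj ⟨y, hy⟩
  have hxy : T x = y := congrArg Subtype.val hx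
  rw [← hxy]
  exact hTK K he hf x (hw x.2)

/-- Weights come in unbroken strings. -/
theorem SerreData.string (S : SerreData A e f h) (hA2 : ∀ i, A i i = 2)
    {w : ι → ℤ} (hw : mult h w ≠ 0) (i : ι) (k : ℕ) (hk : (k : ℤ) ≤ w i) :
    mult h (fun j => w j - k * A j i) ≠ 0 := by
  obtain ⟨x, hx0, hx⟩ := S.exists_wtVec' (mult_ne_zero.mp hw)
  have hne := (S.sl2' hA2 i).pow_y_ne (m := (w i).toNat) k (by omega) (v := x) (by
    have : (((w i).toNat : ℤ) : ℂ) = (w i : ℂ) := by rw [Int.toNat_of_nonneg (by omega)]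
    push_cast at this
    rw [this]; exact hx i) hx0
  refine mult_ne_zero_of_mem (wtSpace_le_genWt _ ?_) hne
  have := pow_ad_mem hx (S.f_mem i) k
  convert this using 2
  funext j
  simp only [castW, Pi.add_apply, Pi.smul_apply]
  rw [nsmul_eq_mul]; push_cast; ring

theorem SerreData.sum_mult_le (S : SerreData A e f h) (s : Finset (ι → ℤ)) :
    ∑ w ∈ s, mult h w ≤ finrank ℂ L :=
  sum_finrank_le (S.indep_genWt.comp castW_injective) s

theorem SerreData.finite_weights (S : SerreData A e f h) : {w | mult h w ≠ 0}.Finite := by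
  have := WellFoundedGT.finite_ne_bot_of_iSupIndep (S.indep_genWt.comp castW_injective)
  refine this.subset fun w hw => mult_ne_zero.mp hw

theorem SerreData.killing_eq_zero (S : SerreData A e f h) {χ ψ : ι → ℂ} (hne : χ + ψ ≠ 0)
    {x y : L} (hx : x ∈ genWt h χ) (hy : y ∈ genWt h ψ) : killingForm ℂ L x y = 0 := by
  classical
  have hinternal : DirectSum.IsInternal (genWt h) :=
    (DirectSum.isInternal_submodule_iff_iSupIndep_and_iSup_eq_top _).mpr
      ⟨S.indep_genWt, S.iSup_genWt⟩
  rw [killingForm_apply_apply]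
  refine LinearMap.trace_eq_zero_of_mapsTo_ne hinternal (fun θ => χ + (ψ + θ)) (fun θ h0 => hne ?_) ?_
  · rw [← add_assoc] at h0; simpa using h0
  · intro θ z hz
    exact lie_mem_genWt hx (lie_mem_genWt hy hz)

/-- For a nondegenerate Killing form opposite generalised weight spaces are paired. -/
theorem SerreData.exists_killing_ne [LieAlgebra.IsKilling ℂ L] (S : SerreData A e f h)
    {χ : ι → ℂ} {x : L} (hx : x ∈ genWt h χ) (hx0 : x ≠ 0) :
    ∃ y ∈ genWt h (-χ), killingForm ℂ L x y ≠ 0 := by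
  by_contra! hc
  refine hx0 ?_
  have hker : x ∈ LinearMap.ker (killingForm ℂ L) := by
    rw [LinearMap.mem_ker]
    refine LinearMap.ext fun y => ?_
    have htop : (⊤ : Submodule ℂ L) ≤ LinearMap.ker (killingForm ℂ L x) := by
      rw [← S.iSup_genWt]
      refine iSup_le fun ψ y hy => ?_
      by_cases hψ : χ + ψ = 0
      · rw [eq_neg_of_add_eq_zero_right hψ] at hy
        exact hc y hy
      · exact S.killing_eq_zero hψ hx hy
    exact htop trivial
  rwa [LieAlgebra.IsKilling.ker_killingForm_eq_bot, Submodule.mem_bot] at hker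

end GenWeights

/-! ### Weights of `e₆` on a module of dimension at most 133 -/

section SmallWeights

/-- The weights of the 27-dimensional representation with highest weight `ω₁`. -/
def wts1 : List (List ℤ) := orb E₆ 16 [[1, 0, 0, 0, 0, 0]]
/-- The weights of the 27-dimensional representation with highest weight `ω₆`. -/
def wts6 : List (List ℤ) := orb E₆ 16 [[0, 0, 0, 0, 0, 1]]
/-- The orbits of the dominant weights `ω₂`, `ω₁`, `ω₆` and `0`. -/
def small : List (List ℤ) := rts6 ++ ([[0, 0, 0, 0, 0, 0]] ++ (wts1 ++ wts6))

set_option maxRecDepth 100000 in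
theorem small_closed : ∀ l ∈ small, ∀ i, reflL E₆ i l ∈ small := by decide +kernel
set_option maxRecDepth 100000 in
theorem small_length : small.Nodup ∧ (∀ l ∈ small, l.length = 6) ∧ wts1.length = 27 ∧
    wts6.length = 27 ∧ [0, 0, 0, 0, 0, -1] ∈ wts1 ∧ [-1, 0, 0, 0, 0, 0] ∈ wts6 := by
  decide +kernel
set_option maxRecDepth 100000 in
theorem small_dominant : [0, 0, 0, 0, 0, 0] ∈ small ∧ [1, 0, 0, 0, 0, 0] ∈ small ∧
    [0, 1, 0, 0, 0, 0] ∈ small ∧ [0, 0, 0, 0, 0, 1] ∈ small := by decide +kernel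

/-- The dominant weight `ν` has at least 134 distinct weights among the first `d` levels of its
orbit. -/
def Big (d : ℕ) (ν : List ℤ) : Prop :=
  (orb E₆ d [ν]).Nodup ∧ (∀ l ∈ orb E₆ d [ν], l.length = 6) ∧ 134 ≤ (orb E₆ d [ν]).length

instance (d : ℕ) (ν : List ℤ) : Decidable (Big d ν) := by unfold Big; infer_instance

set_option maxRecDepth 100000 in
theorem big_3 : Big 14 [0, 0, 1, 0, 0, 0] := by decide +kernel
set_option maxRecDepth 100000 in
theorem big_4 : Big 10 [0, 0, 0, 1, 0, 0] := by decide +kernel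
set_option maxRecDepth 100000 in
theorem big_5 : Big 14 [0, 0, 0, 0, 1, 0] := by decide +kernel
set_option maxRecDepth 100000 in
theorem big_16 : Big 12 [1, 0, 0, 0, 0, 1] := by decide +kernel
set_option maxRecDepth 100000 in
theorem big_12 : Big 10 [1, 1, 0, 0, 0, 0] := by decide +kernel
set_option maxRecDepth 100000 in
theorem big_26 : Big 10 [0, 1, 0, 0, 0, 1] := by decide +kernel

variable {L : Type*} [LieRing L] [LieAlgebra ℂ L] [FiniteDimensional ℂ L] {e f h : Fin 6 → L}

/-- If `w ≥ ν` coordinatewise, then every lowering reflection `u ↦ u - uᵢ αᵢ` in the orbit of `ν`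
can be imitated inside the `αᵢ`-string of `u + (w - ν)`. So along with `w` there are at least as
many weights as in the orbit of `ν`, and `w` cannot occur if that orbit is too big. -/
theorem SerreData.not_big (S : SerreData E₆ e f h) (hL : finrank ℂ L ≤ 133) {d : ℕ} {ν : List ℤ}
    (hν : Big d ν) {w : Fin 6 → ℤ} (hw : mult h w ≠ 0) : ¬ ∀ i, vec ν i ≤ w i := by
  intro hle
  obtain ⟨hnd, hlen, hcard⟩ := hν
  have hall := orb_induction (A := E₆) (Q := fun u => mult h (u + (w - vec ν)) ≠ 0)
    (fun u i hu hi => by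
      have := S.string E₆_diag hu i (u i).toNat (by
        have := hle i
        simp only [Pi.add_apply, Pi.sub_apply]; omega)
      rw [Int.toNat_of_nonneg hi.le] at this
      convert this using 2
      funext j
      simp only [reflW, Pi.add_apply]; ring) d [ν] (by simpa using hw)
  have hsum := S.sum_mult_le ((wset (orb E₆ d [ν])).map (addRightEmbedding (w - vec ν)))
  rw [Finset.sum_map] at hsum
  have hge : (wset (n := 6) (orb E₆ d [ν])).card ≤ ∑ u ∈ wset (orb E₆ d [ν]),
      mult h (addRightEmbedding (w - vec ν) u) := by
    rw [Finset.card_eq_sum_ones]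
    refine Finset.sum_le_sum fun u hu => ?_
    obtain ⟨l, hl, rfl⟩ := mem_wset.mp hu
    exact Nat.one_le_iff_ne_zero.mpr (hall l hl)
  rw [card_wset hnd hlen] at hge
  omega

/-- The dominant weights are among `0`, `ω₁`, `ω₂`, `ω₆`: anything else lies above a weight with a
large orbit. The multiples `2ω₁`, `2ω₂`, `2ω₆` are excluded by one step down the string of the
corresponding simple root, which lands above `ω₃`, `ω₄` or `ω₅`. -/
theorem SerreData.dominant (S : SerreData E₆ e f h) (hL : finrank ℂ L ≤ 133)
    {w : Fin 6 → ℤ} (hw : mult h w ≠ 0) (hdom : ∀ i, 0 ≤ w i) : w ∈ wset small := by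
  have key : ∀ {d : ℕ} {ν : List ℤ} (_ : Big d ν) {w : Fin 6 → ℤ} (_ : mult h w ≠ 0),
      ¬ (ν.getD 0 0 ≤ w 0 ∧ ν.getD 1 0 ≤ w 1 ∧ ν.getD 2 0 ≤ w 2 ∧ ν.getD 3 0 ≤ w 3 ∧
        ν.getD 4 0 ≤ w 4 ∧ ν.getD 5 0 ≤ w 5) := fun hν w hw hc =>
    S.not_big hL hν hw fun i => by
      obtain ⟨h0, h1, h2, h3, h4, h5⟩ := hc
      fin_cases i <;> assumption
  have k3 := key big_3 hw
  have k4 := key big_4 hw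
  have k5 := key big_5 hw
  have k16 := key big_16 hw
  have k12 := key big_12 hw
  have k26 := key big_26 hw
  simp only [List.getD_cons_zero, List.getD_cons_succ] at k3 k4 k5 k16 k12 k26
  have d0 := hdom 0
  have d1 := hdom 1
  have d2 := hdom 2
  have d3 := hdom 3
  have d4 := hdom 4
  have d5 := hdom 5
  have s0 : w 0 < 2 := by
    by_contra hc
    have := key big_3 (S.string E₆_diag hw 0 1 (by push_cast; omega))
    simp [E₆] at this
    omega
  have s1 : w 1 < 2 := by
    by_contra hc
    have := key big_4 (S.string E₆_diag hw 1 1 (by push_cast; omega))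
    simp [E₆] at this
    omega
  have s5 : w 5 < 2 := by
    by_contra hc
    have := key big_5 (S.string E₆_diag hw 5 1 (by push_cast; omega))
    simp [E₆] at this
    omega
  have e2 : w 2 = 0 := by omega
  have e3 : w 3 = 0 := by omega
  have e4 : w 4 = 0 := by omega
  obtain ⟨m0, m1, m2, m6⟩ := small_dominant
  have fin : ∀ a b c d x y : ℤ, w 0 = a → w 1 = b → w 2 = c → w 3 = d → w 4 = x → w 5 = y →
      [a, b, c, d, x, y] ∈ small → w ∈ wset small := by
    rintro _ _ _ _ _ _ rfl rfl rfl rfl rfl rfl hm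
    exact mem_wset_of_ofFn (by simpa [List.ofFn_succ] using hm)
  rcases (by omega : w 0 = 0 ∧ w 1 = 0 ∧ w 5 = 0 ∨ w 0 = 1 ∧ w 1 = 0 ∧ w 5 = 0 ∨
    w 0 = 0 ∧ w 1 = 1 ∧ w 5 = 0 ∨ w 0 = 0 ∧ w 1 = 0 ∧ w 5 = 1) with c | c | c | c
  · exact fin _ _ _ _ _ _ c.1 c.2.1 e2 e3 e4 c.2.2 m0
  · exact fin _ _ _ _ _ _ c.1 c.2.1 e2 e3 e4 c.2.2 m1
  · exact fin _ _ _ _ _ _ c.1 c.2.1 e2 e3 e4 c.2.2 m2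
  · exact fin _ _ _ _ _ _ c.1 c.2.1 e2 e3 e4 c.2.2 m6

/-- Twice the height of a weight. -/
def height2 (w : Fin 6 → ℤ) : ℤ :=
  16 * w 0 + 22 * w 1 + 30 * w 2 + 42 * w 3 + 30 * w 4 + 16 * w 5

theorem height2_reflW (i : Fin 6) (w : Fin 6 → ℤ) :
    height2 (reflW E₆ i w) = height2 w - 2 * w i := by
  fin_cases i <;> simp [height2, reflW, E₆] <;> ring

/-- A weight outside the list of maximal height would be dominant, since the list is stable under
reflections. -/
theorem SerreData.mem_small (S : SerreData E₆ e f h) (hL : finrank ℂ L ≤ 133)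
    {w : Fin 6 → ℤ} (hw : mult h w ≠ 0) : w ∈ wset small := by
  by_contra hc
  obtain ⟨u, ⟨hu, hu'⟩, hmax⟩ := Set.exists_max_image {u | mult h u ≠ 0 ∧ u ∉ wset small} height2
    (S.finite_weights.subset fun u hu => hu.1) ⟨w, hw, hc⟩
  refine hu' (S.dominant hL hu fun i => ?_)
  by_contra! hi
  have := hmax (reflW E₆ i u) ⟨by rwa [S.mult_refl E₆_diag],
    fun hm => hu' (wset_closed E₆_diag small_closed u i hm)⟩
  rw [height2_reflW] at this
  omega

theorem SerreData.mult_orb (S : SerreData E₆ e f h) (d : ℕ) (ν : List ℤ) :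
    ∀ l ∈ orb E₆ d [ν], mult h (vec l) = mult h (vec ν) :=
  orb_induction (Q := fun w => mult h w = mult h (vec ν))
    (fun w i hw _ => by rw [S.mult_refl E₆_diag]; exact hw) d [ν] (by simp)

/-- The column of the Cartan matrix: a simple root as an integral weight. -/
def rt (i : Fin 6) : Fin 6 → ℤ := fun j => E₆ j i

theorem SerreData.mult_rt (S : SerreData E₆ e f h) (i : Fin 6) :
    mult h (rt i) = mult h (vec [0, 1, 0, 0, 0, 0]) := by
  have := S.mult_orb 21 _ _ (rts6_simple i).1
  rw [vec_ofFn] at this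
  rw [← this]
  congr 1
  ext j; simp [rt]

theorem SerreData.mult_neg_rt (S : SerreData E₆ e f h) (i : Fin 6) :
    mult h (-rt i) = mult h (vec [0, 1, 0, 0, 0, 0]) := by
  have := S.mult_orb 21 _ _ (rts6_simple i).2
  rw [vec_ofFn] at this
  rw [← this]
  congr 1
  ext j; simp [rt]

theorem SerreData.e_mem_genWt (S : SerreData E₆ e f h) (i : Fin 6) :
    e i ∈ genWt h (castW (rt i)) := wtSpace_le_genWt _ (S.e_mem i)

theorem SerreData.f_mem_genWt (S : SerreData E₆ e f h) (i : Fin 6) :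
    f i ∈ genWt h (castW (-rt i)) := by
  have := wtSpace_le_genWt _ (S.f_mem i)
  convert this using 2
  ext j; simp [castW, rt]

theorem SerreData.six_le (S : SerreData E₆ e f h) (he : ∀ i, e i ≠ 0) : 6 ≤ mult h 0 := by
  have hli : LinearIndependent ℂ h := by
    rw [Fintype.linearIndependent_iff]
    intro c hc i
    exact congrFun (S.coeff_eq_zero (by rw [E₆_det]; norm_num) he c fun j => by simp [hc]) i
  have := finrank_span_eq_card hli
  rw [Fintype.card_fin] at this
  refine this.ge.trans ?_
  refine Submodule.finrank_mono (Submodule.span_le.mpr ?_)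
  rintro _ ⟨i, rfl⟩
  rw [castW_zero]
  exact wtSpace_le_genWt _ (S.h_mem i)

theorem sum_map_const {M : List (List ℤ)} {a : ℕ} (hM : ∀ l ∈ M, mult h (vec l) = a) :
    (M.map fun l => mult h (vec l)).sum = M.length * a := by
  rw [List.map_congr_left hM]; simp

/-- Decomposition of a Lie algebra of dimension at most 133 under `e₆`: the roots have
multiplicity one, and the two dual 27-dimensional representations occur equally often, at most
once. -/
theorem SerreData.mults [LieAlgebra.IsKilling ℂ L] (S : SerreData E₆ e f h)
    (hL : finrank ℂ L ≤ 133) (he : ∀ i, e i ≠ 0) :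
    mult h (vec [0, 1, 0, 0, 0, 0]) = 1 ∧
    (mult h (vec [1, 0, 0, 0, 0, 0]) = 0 ∧ mult h (vec [0, 0, 0, 0, 0, 1]) = 0 ∨
      mult h (vec [1, 0, 0, 0, 0, 0]) = 1 ∧ mult h (vec [0, 0, 0, 0, 0, 1]) = 1) := by
  have h1 := S.mult_orb 16 [1, 0, 0, 0, 0, 0]
  have h6 := S.mult_orb 16 [0, 0, 0, 0, 0, 1]
  have hr := S.mult_orb 21 [0, 1, 0, 0, 0, 0]
  have h0 := S.six_le he
  have hr0 : mult h (vec [0, 1, 0, 0, 0, 0]) ≠ 0 := by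
    rw [← S.mult_rt 0]
    exact mult_ne_zero_of_mem (S.e_mem_genWt 0) (he 0)
  have hdual : ∀ w : Fin 6 → ℤ, mult h w ≠ 0 → mult h (-w) ≠ 0 := by
    intro w hw
    obtain ⟨x, hx, hx0⟩ := Submodule.exists_mem_ne_zero_of_ne_bot (mult_ne_zero.mp hw)
    obtain ⟨y, hy, hxy⟩ := S.exists_killing_ne hx hx0
    refine mult_ne_zero_of_mem (x := y) (by rwa [castW_neg]) ?_
    rintro rfl
    simp at hxy
  obtain ⟨hnd, hlen, l1, l6, n1, n6⟩ := small_length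
  have d1 := hdual (vec [1, 0, 0, 0, 0, 0])
  have d6 := hdual (vec [0, 0, 0, 0, 0, 1])
  rw [show -(vec [1, 0, 0, 0, 0, 0] : Fin 6 → ℤ) = vec [-1, 0, 0, 0, 0, 0] by decide,
    h6 _ n6] at d1
  rw [show -(vec [0, 0, 0, 0, 0, 1] : Fin 6 → ℤ) = vec [0, 0, 0, 0, 0, -1] by decide,
    h1 _ n1] at d6
  have hsum := S.sum_mult_le (wset small)
  rw [wset, List.sum_toFinset _ (hnd.map_on fun l hl l' hl' h =>
    vec_injOn (hlen l hl) (hlen l' hl') h), List.map_map, small] at hsum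
  change ((rts6 ++ ([[0, 0, 0, 0, 0, 0]] ++ (wts1 ++ wts6))).map
    fun l => mult h (vec l)).sum ≤ _ at hsum
  rw [List.map_append, List.map_append, List.map_append, List.sum_append, List.sum_append,
    List.sum_append, sum_map_const (M := rts6) hr, sum_map_const (M := wts1) h1, sum_map_const (M := wts6) h6,
    rts6_length.1, l1, l6,
    List.map_singleton, List.sum_singleton,
    show (vec [0, 0, 0, 0, 0, 0] : Fin 6 → ℤ) = 0 by decide] at hsum
  omega

end SmallWeights

/-! ### Occurrence of the 27-dimensional representations -/

section Twentyseven

variable {L : Type*} [LieRing L] [LieAlgebra ℂ L] [FiniteDimensional ℂ L] {e f h : Fin 6 → L}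

theorem exists_smul_of_mult {w : Fin 6 → ℤ} (hw : mult h w = 1) {x y : L}
    (hx : x ∈ genWt h (castW w)) (hx0 : x ≠ 0) (hy : y ∈ genWt h (castW w)) :
    ∃ c : ℂ, c • x = y := by
  have := (finrank_eq_one_iff_of_nonzero' (⟨x, hx⟩ : genWt h (castW w))
    (fun h0 => hx0 (congrArg Subtype.val h0))).mp hw ⟨y, hy⟩
  obtain ⟨c, hc⟩ := this
  exact ⟨c, congrArg Subtype.val hc⟩

theorem SerreData.genWt_le_wtSpace (S : SerreData E₆ e f h) {w : Fin 6 → ℤ} (hw : mult h w = 1) :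
    genWt h (castW w) ≤ wtSpace h (castW w) := by
  intro y hy
  obtain ⟨x, hx0, hx⟩ := S.exists_wtVec' (mult_ne_zero.mp (by rw [hw]; exact one_ne_zero))
  obtain ⟨c, rfl⟩ := exists_smul_of_mult hw (wtSpace_le_genWt _ hx) hx0 hy
  exact Submodule.smul_mem _ c hx

/-- For a subalgebra `K` and a fixed `x`, the subalgebra of those `y ∈ K` with `[x, y] ∈ K`. -/
def normSub (K : LieSubalgebra ℂ L) (x : L) : LieSubalgebra ℂ L where
  carrier := {y | y ∈ K ∧ ⁅x, y⁆ ∈ K}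
  add_mem' := fun ha hb => ⟨K.add_mem ha.1 hb.1, by rw [lie_add]; exact K.add_mem ha.2 hb.2⟩
  zero_mem' := ⟨K.zero_mem, by rw [lie_zero]; exact K.zero_mem⟩
  smul_mem' := fun c _ ha => ⟨K.smul_mem c ha.1, by rw [lie_smul]; exact K.smul_mem c ha.2⟩
  lie_mem' := fun ha hb => ⟨K.lie_mem ha.1 hb.1, by
    rw [leibniz_lie]; exact K.add_mem (K.lie_mem ha.2 hb.1) (K.lie_mem ha.1 hb.2)⟩

theorem SerreData.rts_le (S : SerreData E₆ e f h) (he : ∀ i, e i ≠ 0)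
    (hm : mult h (vec [0, 1, 0, 0, 0, 0]) = 1) (K : LieSubalgebra ℂ L) (heK : ∀ i, e i ∈ K)
    (hfK : ∀ i, f i ∈ K) : ∀ l ∈ rts6, genWt h (castW (vec l)) ≤ K.toSubmodule := by
  have hrt : ∀ i, genWt h (castW (rt i)) ≤ K.toSubmodule := by
    intro i y hy
    obtain ⟨c, rfl⟩ := exists_smul_of_mult ((S.mult_rt i).trans hm) (S.e_mem_genWt i) (he i) hy
    exact K.smul_mem c (heK i)
  have hstep : ∀ w i, genWt h (castW w) ≤ K.toSubmodule →
      genWt h (castW (reflW E₆ i w)) ≤ K.toSubmodule := fun w i hw =>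
    S.genWt_refl_le E₆_diag w i K (heK i) (hfK i) hw
  refine orb_induction (Q := fun w => genWt h (castW w) ≤ K.toSubmodule)
    (fun w i hw _ => hstep w i hw) 21 _ ?_
  -- the highest root is reached from a simple one, since reflections are involutions
  by_contra hc
  simp only [List.mem_singleton, forall_eq] at hc
  have hall := orb_induction (A := E₆) (Q := fun w => ¬ genWt h (castW w) ≤ K.toSubmodule)
    (fun w i hw _ hb => by
      have := hstep _ i hb
      rw [reflW_reflW E₆_diag] at this
      exact hw this) 21 [[0, 1, 0, 0, 0, 0]] (by simpa using hc) _ (rts6_simple 0).1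
  rw [vec_ofFn] at hall
  refine hall ?_
  convert hrt 0 using 3
  ext j; simp [rt]

/-- If no 27-dimensional representation occurs, the subalgebra generated by `e` and `f` is
an ideal. -/
theorem SerreData.isIdeal (S : SerreData E₆ e f h) (hL : finrank ℂ L ≤ 133) (he : ∀ i, e i ≠ 0)
    (hm : mult h (vec [0, 1, 0, 0, 0, 0]) = 1) (hm1 : mult h (vec [1, 0, 0, 0, 0, 0]) = 0)
    (hm6 : mult h (vec [0, 0, 0, 0, 0, 1]) = 0) (K : LieSubalgebra ℂ L) (heK : ∀ i, e i ∈ K)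
    (hfK : ∀ i, f i ∈ K)
    (hmin : ∀ N : LieSubalgebra ℂ L, (∀ i, e i ∈ N) → (∀ i, f i ∈ N) → K ≤ N) (x y : L)
    (hy : y ∈ K) : ⁅x, y⁆ ∈ K := by
  have hrts := S.rts_le he hm K heK hfK
  have hsimple : ∀ i, genWt h (castW (rt i)) ≤ K.toSubmodule := fun i => by
    convert hrts _ (rts6_simple i).1 using 3
    rw [vec_ofFn]; ext j; simp [rt]
  have hsimple' : ∀ i, genWt h (castW (-rt i)) ≤ K.toSubmodule := fun i => by
    convert hrts _ (rts6_simple i).2 using 3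
    rw [vec_ofFn]; ext j; simp [rt]
  have htop : (⊤ : Submodule ℂ L) ≤
      K.toSubmodule.comap (LieAlgebra.ad ℂ L y : L →ₗ[ℂ] L) := by
    rw [← S.iSup_genWt' E₆_diag]
    refine iSup_le fun w x hx => ?_
    suffices ⁅x, y⁆ ∈ K by
      rw [← lie_skew, neg_mem_iff] at this
      simpa using this
    by_cases hw : mult h w = 0
    · rw [eq_zero_of_mult hw hx, zero_lie]; exact K.zero_mem
    obtain ⟨l, hl, rfl⟩ := mem_wset.mp (S.mem_small hL hw)
    simp only [small, List.mem_append, List.mem_singleton] at hl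
    rcases hl with hl | rfl | hl | hl
    · exact K.lie_mem (hrts l hl hx) hy
    · rw [show (vec [0, 0, 0, 0, 0, 0] : Fin 6 → ℤ) = 0 by decide, castW_zero] at hx
      refine (hmin (normSub K x) (fun i => ⟨heK i, hsimple i ?_⟩)
        (fun i => ⟨hfK i, hsimple' i ?_⟩) hy).2
      · have := lie_mem_genWt hx (S.e_mem_genWt i)
        rwa [zero_add] at this
      · have := lie_mem_genWt hx (S.f_mem_genWt i)
        rwa [zero_add] at this
    · exact absurd ((S.mult_orb _ _ l hl).trans hm1) hw
    · exact absurd ((S.mult_orb _ _ l hl).trans hm6) hw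
  rw [← lie_skew, neg_mem_iff]
  simpa using htop (Submodule.mem_top (x := x))

end Twentyseven

/-! ### Extending Serre generators of `E₆` to Serre generators of `E₇` -/

section Extension

variable {L : Type*} [LieRing L] [LieAlgebra ℂ L] [FiniteDimensional ℂ L] {e f h : Fin 6 → L}

/-- The fundamental weight `ω₆`; with indices starting at 0 it is dual to `h 5`. -/
def om : Fin 6 → ℤ := vec [0, 0, 0, 0, 0, 1]

set_option maxRecDepth 100000 in
theorem notMem_small : (∀ i, List.ofFn (rt i + om) ∉ small) ∧
    (∀ i, List.ofFn (-rt i + -om) ∉ small) ∧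
    (∀ i, i ≠ 5 → List.ofFn (rt i + -om) ∉ small) ∧
    (∀ i, i ≠ 5 → List.ofFn (-rt i + om) ∉ small) ∧
    List.ofFn (rt 5 + (rt 5 + -om)) ∉ small ∧ List.ofFn (-rt 5 + (-rt 5 + om)) ∉ small ∧
    List.ofFn (-om + (rt 5 + -om)) ∉ small ∧ List.ofFn (om + (-rt 5 + om)) ∉ small := by
  decide +kernel

theorem castW_add (w u : Fin 6 → ℤ) : castW (w + u) = castW w + castW u := by
  ext; simp [castW]

theorem SerreData.lie_eq_zero (S : SerreData E₆ e f h) (hL : finrank ℂ L ≤ 133)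
    {w u : Fin 6 → ℤ} (hwu : List.ofFn (w + u) ∉ small) {x y : L} (hx : x ∈ genWt h (castW w))
    (hy : y ∈ genWt h (castW u)) : ⁅x, y⁆ = 0 := by
  have hm := lie_mem_genWt hx hy
  rw [← castW_add] at hm
  refine eq_zero_of_mult ?_ hm
  by_contra h0
  obtain ⟨l, hl, hlw⟩ := mem_wset.mp (S.mem_small hL h0)
  refine hwu ?_
  rwa [← hlw, show List.ofFn (vec l : Fin 6 → ℤ) = l from
    vec_injOn (by simp) (small_length.2.1 l hl) (vec_ofFn _)]

/-- The vanishing brackets between `e₆` and vectors `x, y` of weights `∓ω₆`. -/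
structure Extra (e f : Fin 6 → L) (x y : L) : Prop where
  ey : ∀ i, ⁅e i, y⁆ = 0
  fx : ∀ i, ⁅f i, x⁆ = 0
  ex : ∀ i, i ≠ 5 → ⁅e i, x⁆ = 0
  fy : ∀ i, i ≠ 5 → ⁅f i, y⁆ = 0
  eex : ⁅e 5, ⁅e 5, x⁆⁆ = 0
  ffy : ⁅f 5, ⁅f 5, y⁆⁆ = 0
  xex : ⁅x, ⁅e 5, x⁆⁆ = 0
  yfy : ⁅y, ⁅f 5, y⁆⁆ = 0

theorem SerreData.extra (S : SerreData E₆ e f h) (hL : finrank ℂ L ≤ 133) {x y : L}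
    (hx : x ∈ genWt h (castW (-om))) (hy : y ∈ genWt h (castW om)) : Extra e f x y := by
  obtain ⟨n1, n2, n3, n4, n5, n6, n7, n8⟩ := notMem_small
  have hex := lie_mem_genWt (S.e_mem_genWt 5) hx
  have hfy := lie_mem_genWt (S.f_mem_genWt 5) hy
  rw [← castW_add] at hex hfy
  exact ⟨fun i => S.lie_eq_zero hL (n1 i) (S.e_mem_genWt i) hy,
    fun i => S.lie_eq_zero hL (n2 i) (S.f_mem_genWt i) hx,
    fun i hi => S.lie_eq_zero hL (n3 i hi) (S.e_mem_genWt i) hx,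
    fun i hi => S.lie_eq_zero hL (n4 i hi) (S.f_mem_genWt i) hy,
    S.lie_eq_zero hL n5 (S.e_mem_genWt 5) hex,
    S.lie_eq_zero hL n6 (S.f_mem_genWt 5) hfy,
    S.lie_eq_zero hL n7 hx hex, S.lie_eq_zero hL n8 hy hfy⟩

end Extension

section Extension

variable {L : Type*} [LieRing L] [LieAlgebra ℂ L] [FiniteDimensional ℂ L] {e f h : Fin 6 → L}

theorem E₇_castSucc (i j : Fin 6) : E₇ i.castSucc j.castSucc = E₆ i j := by
  fin_cases i <;> fin_cases j <;> rfl
theorem E₇_last_left (j : Fin 6) : E₇ (Fin.last 6) j.castSucc = if j = 5 then -1 else 0 := by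
  decide +revert
theorem E₇_last_right (j : Fin 6) : E₇ j.castSucc (Fin.last 6) = if j = 5 then -1 else 0 := by
  decide +revert

/-- Vectors `x, y` of weights `∓ω₆`, normalised so that `[[x, y], e₅] = -e₅`, extend Serre
generators of type `E₆` to Serre generators of type `E₇`. -/
theorem SerreData.extend (S : SerreData E₆ e f h) (he : e 5 ≠ 0) {x y : L}
    (X : Extra e f x y) (hx : ∀ i, ⁅h i, x⁆ = (if i = 5 then -1 else 0 : ℂ) • x)
    (hy : ∀ i, ⁅h i, y⁆ = (if i = 5 then 1 else 0 : ℂ) • y) (hne : ⁅⁅x, y⁆, e 5⁆ = -e 5)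
    {a b c : ℂ} (hf5 : ⁅⁅x, y⁆, f 5⁆ = a • f 5) (hxx : ⁅⁅x, y⁆, x⁆ = b • x)
    (hyy : ⁅⁅x, y⁆, y⁆ = c • y) :
    SerreData E₇ (Fin.snoc e x : Fin 7 → L) (Fin.snoc f y) (Fin.snoc h ⁅x, y⁆) := by
  have hz : ∀ i, ⁅h i, ⁅x, y⁆⁆ = 0 := fun i => by
    rw [leibniz_lie, hx, hy, smul_lie, lie_smul]
    split_ifs
    · rw [neg_smul, one_smul, neg_add_cancel]
    · rw [zero_smul, add_zero]
  have h5 : h 5 ≠ 0 := fun h0 => by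
    have := S.he 5 5
    rw [h0, zero_lie] at this
    exact he ((smul_eq_zero.mp this.symm).resolve_left (by norm_num [E₆_diag]))
  have ha : a = 1 := by
    have h1 : ⁅⁅x, y⁆, h 5⁆ = 0 := by rw [← lie_skew, hz, neg_zero]
    rw [← S.ef 5, leibniz_lie, hne, hf5, neg_lie, lie_smul, S.ef, ← neg_one_smul ℂ (h 5),
      ← add_smul] at h1
    have := (smul_eq_zero.mp h1).resolve_right h5
    linear_combination this
  have hyx : ∀ z : L, ⁅y, ⁅x, z⁆⁆ = -⁅⁅x, y⁆, z⁆ + ⁅x, ⁅y, z⁆⁆ := fun z => by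
    rw [leibniz_lie y x z, ← lie_skew y x, neg_lie]
  have hye : ∀ i, ⁅y, e i⁆ = 0 := fun i => by rw [← lie_skew, X.ey, neg_zero]
  have hxf : ∀ i, ⁅x, f i⁆ = 0 := fun i => by rw [← lie_skew, X.fx, neg_zero]
  -- the `x`-string through `e₅` has length two, which determines the eigenvalue of `h₇` on `x`
  have hv : ⁅y, ⁅x, e 5⁆⁆ = e 5 := by rw [hyx, hne, hye, lie_zero, neg_neg, add_zero]
  have hxv : ⁅x, ⁅x, e 5⁆⁆ = 0 := by
    rw [← lie_skew x (e 5), lie_neg, X.xex, neg_zero]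
  have hb : b = 2 := by
    have h1 : ⁅y, ⁅x, ⁅x, e 5⁆⁆⁆ = 0 := by rw [hxv, lie_zero]
    rw [hyx, hv, leibniz_lie, hxx, hne, smul_lie, lie_neg] at h1
    have h2 : (2 - b) • ⁅x, e 5⁆ = 0 := by rw [← h1]; module
    rcases smul_eq_zero.mp h2 with h3 | h3
    · linear_combination -h3
    · rw [h3, lie_zero] at hv
      exact absurd hv.symm he
  have hxy0 : ⁅x, y⁆ ≠ 0 := fun h0 => by
    rw [h0, zero_lie] at hne
    exact he (neg_eq_zero.mp hne.symm)
  have hc : c = -2 := by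
    have h1 : ⁅⁅x, y⁆, ⁅x, y⁆⁆ = 0 := lie_self _
    rw [leibniz_lie, hxx, hyy, smul_lie, lie_smul, ← add_smul] at h1
    have := (smul_eq_zero.mp h1).resolve_right hxy0
    linear_combination this - hb
  subst ha hb hc
  have hze : ∀ i, ⁅⁅x, y⁆, e i⁆ = (if i = 5 then -1 else 0 : ℂ) • e i := fun i => by
    split_ifs with hi
    · subst hi; rw [hne]; simp
    · rw [lie_lie, hye, ← lie_skew x (e i), X.ex i hi]; simp
  have hzf : ∀ i, ⁅⁅x, y⁆, f i⁆ = (if i = 5 then 1 else 0 : ℂ) • f i := fun i => by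
    split_ifs with hi
    · subst hi; rw [hf5]
    · rw [lie_lie, hxf, ← lie_skew y (f i), X.fy i hi]; simp
  constructor
  · intro i j
    refine Fin.lastCases ?_ (fun i => ?_) i <;> refine Fin.lastCases ?_ (fun j => ?_) j <;>
      simp only [Fin.snoc_last, Fin.snoc_castSucc, S.hh, hz, lie_self]
    rw [← lie_skew, hz, neg_zero]
  · intro i
    refine Fin.lastCases ?_ (fun i => ?_) i <;>
      simp only [Fin.snoc_last, Fin.snoc_castSucc, S.ef]
  · intro i j hij
    revert hij
    refine Fin.lastCases ?_ (fun i => ?_) i <;> refine Fin.lastCases ?_ (fun j => ?_) j <;>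
      simp only [Fin.snoc_last, Fin.snoc_castSucc, ne_eq, not_true_eq_false, false_imp_iff, hxf,
        X.ey, implies_true]
    exact fun hij => S.ef_ne i j fun h => hij (by rw [h])
  · intro i j
    refine Fin.lastCases ?_ (fun i => ?_) i <;> refine Fin.lastCases ?_ (fun j => ?_) j <;>
      simp only [Fin.snoc_last, Fin.snoc_castSucc, E₇_castSucc, E₇_last_left, E₇_last_right,
        E₇_diag, S.he, hxx, hze, hx] <;> push_cast <;> rfl
  · intro i j
    refine Fin.lastCases ?_ (fun i => ?_) i <;> refine Fin.lastCases ?_ (fun j => ?_) j <;>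
      simp only [Fin.snoc_last, Fin.snoc_castSucc, E₇_castSucc, E₇_last_left, E₇_last_right,
        E₇_diag, S.hf, hyy, hzf, hy] <;> push_cast <;> (try split_ifs) <;> simp
  · intro i j
    refine Fin.lastCases ?_ (fun i => ?_) i <;> refine Fin.lastCases ?_ (fun j => ?_) j <;>
      simp only [Fin.snoc_last, Fin.snoc_castSucc, E₇_castSucc, E₇_last_left, E₇_last_right,
        S.ade, lie_self, map_zero]
    · split_ifs with hj
      · subst hj; simpa using hxv
      · rw [← lie_skew, X.ex j hj]; simp
    · split_ifs with hi
      · subst hi; simpa using X.eex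
      · rw [X.ex i hi]; simp
  · intro i j
    refine Fin.lastCases ?_ (fun i => ?_) i <;> refine Fin.lastCases ?_ (fun j => ?_) j <;>
      simp only [Fin.snoc_last, Fin.snoc_castSucc, E₇_castSucc, E₇_last_left, E₇_last_right,
        S.adf, lie_self, map_zero]
    · split_ifs with hj
      · subst hj
        have : ⁅y, ⁅y, f 5⁆⁆ = 0 := by rw [← lie_skew y (f 5), lie_neg, X.yfy, neg_zero]
        simpa using this
      · rw [← lie_skew, X.fy j hj]; simp
    · split_ifs with hi
      · subst hi; simpa using X.ffy
      · rw [X.fy i hi]; simp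

/-- If the 27-dimensional representations occur once each, Serre generators of type `E₆` extend
to Serre generators of type `E₇`. -/
theorem SerreData.exists_extend [LieAlgebra.IsKilling ℂ L] (S : SerreData E₆ e f h)
    (hL : finrank ℂ L ≤ 133) (he : ∀ i, e i ≠ 0) (hf : ∀ i, f i ≠ 0)
    (hm : mult h (vec [0, 1, 0, 0, 0, 0]) = 1) (hm1 : mult h (vec [1, 0, 0, 0, 0, 0]) = 1)
    (hm6 : mult h (vec [0, 0, 0, 0, 0, 1]) = 1) :
    ∃ (x y z : L), SerreData E₇ (Fin.snoc e x : Fin 7 → L) (Fin.snoc f y) (Fin.snoc h z) := by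
  have hmn : mult h (-om) = 1 := by
    rw [← hm1, ← S.mult_orb 16 _ _ small_length.2.2.2.2.1]
    congr 1
    decide
  have hmp : mult h om = 1 := hm6
  obtain ⟨x, hx, hx0⟩ := Submodule.exists_mem_ne_zero_of_ne_bot
    (mult_ne_zero.mp (by rw [hmn]; exact one_ne_zero))
  obtain ⟨y, hy, hxy⟩ := S.exists_killing_ne hx hx0
  rw [castW_neg, neg_neg] at hy
  have hy0 : y ≠ 0 := by rintro rfl; simp at hxy
  have X := S.extra hL hx hy
  have hx' := S.genWt_le_wtSpace hmn hx
  have hy' := S.genWt_le_wtSpace hmp hy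
  have hx'' : ∀ i, ⁅h i, x⁆ = (if i = 5 then -1 else 0 : ℂ) • x := fun i => by
    rw [hx' i]
    congr 1
    fin_cases i <;> simp [castW, om, vec]
  have hy'' : ∀ i, ⁅h i, y⁆ = (if i = 5 then 1 else 0 : ℂ) • y := fun i => by
    rw [hy' i]
    congr 1
    fin_cases i <;> simp [castW, om, vec]
  have hz : ⁅x, y⁆ ∈ genWt h 0 := by
    have := lie_mem_genWt hx hy
    rwa [castW_neg, neg_add_cancel] at this
  have hz' : ∀ {w : Fin 6 → ℤ} {u : L}, mult h w = 1 → u ∈ genWt h (castW w) → u ≠ 0 →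
      ∃ c : ℂ, c • u = ⁅⁅x, y⁆, u⁆ := fun {w u} hw hu hu0 => by
    have := lie_mem_genWt hz hu
    rw [zero_add] at this
    exact exists_smul_of_mult hw hu hu0 this
  obtain ⟨a, ha⟩ := hz' ((S.mult_rt 5).trans hm) (S.e_mem_genWt 5) (he 5)
  obtain ⟨a', ha'⟩ := hz' ((S.mult_neg_rt 5).trans hm) (S.f_mem_genWt 5) (hf 5)
  obtain ⟨b, hb⟩ := hz' hmn hx hx0
  obtain ⟨c, hc⟩ := hz' hmp hy hy0
  -- `a κ(e₅, f₅) = κ([x, y], h₅) = -κ(x, y)`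
  have ha0 : a ≠ 0 := by
    rintro rfl
    rw [zero_smul] at ha
    have h1 := LieModule.traceForm_apply_lie_apply ℂ L L ⁅x, y⁆ (e 5) (f 5)
    rw [← ha, S.ef, map_zero, LinearMap.zero_apply,
      LieModule.traceForm_apply_lie_apply, ← lie_skew y, hy'' 5] at h1
    simp only [if_true, one_smul, map_neg] at h1
    exact hxy (neg_eq_zero.mp h1.symm)
  have X' : Extra e f x ((-a⁻¹) • y) := S.extra hL hx (Submodule.smul_mem _ _ hy)
  refine ⟨x, (-a⁻¹) • y, ⁅x, (-a⁻¹) • y⁆, S.extend (a := -a⁻¹ * a') (b := -a⁻¹ * b)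
    (c := -a⁻¹ * c) (he 5) X' hx'' ?_ ?_ ?_ ?_ ?_⟩
  · intro i; rw [lie_smul, hy'' i, smul_comm]
  · rw [lie_smul, smul_lie, ← ha, smul_smul, neg_mul, inv_mul_cancel₀ ha0, neg_one_smul]
  · rw [lie_smul, smul_lie, ← ha', smul_smul]
  · rw [lie_smul, smul_lie, ← hb, smul_smul]
  · rw [lie_smul _ x y, smul_lie, lie_smul, ← hc]; module

end Extension

/-! ### Extending embeddings of `e₆` to automorphisms of `e₇` -/

section Embeddings

local notation "𝔢₆" => LieAlgebra.e₆ ℂ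
local notation "𝔢₇" => LieAlgebra.e₇ ℂ

/-- The images of the generators of `e₆` extend to a family in `e₇` satisfying the Serre relations of
type `E₇`. -/
theorem exists_extend_e₇ [Nontrivial 𝔢₆] (ε : 𝔢₆ →ₗ⁅ℂ⁆ 𝔢₇) (hε : Function.Injective ε) :
    ∃ x y z : 𝔢₇, SerreData E₇ (Fin.snoc (ε ∘ genE E₆) x : Fin 7 → 𝔢₇)
      (Fin.snoc (ε ∘ genF E₆) y) (Fin.snoc (ε ∘ genH E₆) z) := by
  have : Nontrivial 𝔢₇ := hε.nontrivial
  have := isKilling_e₇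
  have S := (serreData_gen E₆).map ε
  have g := generates_gen E₆
  have he0 : ∀ i, genE E₆ i ≠ 0 := (serreData_gen E₆).e_ne_zero g E₆_diag conn_E₆
  have hf0 : ∀ i, genF E₆ i ≠ 0 := (serreData_gen E₆).swap.e_ne_zero g.swap E₆_diag conn_E₆
  have he : ∀ i, (ε ∘ genE E₆) i ≠ 0 := fun i h0 => he0 i (hε (h0.trans (map_zero ε).symm))
  have hf : ∀ i, (ε ∘ genF E₆) i ≠ 0 := fun i h0 => hf0 i (hε (h0.trans (map_zero ε).symm))
  obtain ⟨hm, ⟨hm1, hm6⟩ | ⟨hm1, hm6⟩⟩ := S.mults finite_e₇.2 he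
  · -- otherwise the image is an ideal, hence everything, which is too big
    exfalso
    have hideal := S.isIdeal finite_e₇.2 he hm hm1 hm6 ε.range (fun i => ⟨_, rfl⟩)
      (fun i => ⟨_, rfl⟩) (fun N h1 h2 => by
        rintro _ ⟨u, rfl⟩
        exact g (N.comap ε) h1 h2 u)
    let I : LieIdeal ℂ 𝔢₇ := { ε.range.toSubmodule with lie_mem := fun {x y} hy => hideal x y hy }
    have hI : I = ⊤ := ideal_e₇ I fun hb => he 0 (by
      have : ε (genE E₆ 0) ∈ I := ⟨_, rfl⟩
      rwa [hb, LieSubmodule.mem_bot] at this)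
    have hsurj : Function.Surjective (ε : 𝔢₆ →ₗ[ℂ] 𝔢₇) := fun x => by
      have : x ∈ I := hI ▸ LieSubmodule.mem_top x
      exact this
    have h1 := LinearMap.finrank_le_finrank_of_surjective hsurj
    have h2 := finite_e₆.2
    have h3 := lt_finrank_e₇
    omega
  · exact S.exists_extend finite_e₇.2 he hf hm hm1 hm6

/-- The standard inclusion of Dynkin diagrams makes `e₇` contain Serre generators of type `E₆`. -/
theorem serreData_block {L : Type*} [LieRing L] [LieAlgebra ℂ L] {e f h : Fin 7 → L}
    (S : SerreData E₇ e f h) :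
    SerreData E₆ (e ∘ Fin.castSucc) (f ∘ Fin.castSucc) (h ∘ Fin.castSucc) where
  hh i j := S.hh _ _
  ef i := S.ef _
  ef_ne i j hij := S.ef_ne _ _ fun h => hij (Fin.castSucc_injective _ h)
  he i j := by rw [← E₇_castSucc]; exact S.he _ _
  hf i j := by rw [← E₇_castSucc]; exact S.hf _ _
  ade i j := by rw [← E₇_castSucc]; exact S.ade _ _
  adf i j := by rw [← E₇_castSucc]; exact S.adf _ _

/-- Every embedding factors through the standard one via an automorphism of `e₇`. -/
theorem exists_automorphism [Nontrivial 𝔢₆] (j : 𝔢₆ →ₗ⁅ℂ⁆ 𝔢₇)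
    (hje : ∀ i, j (genE E₆ i) = genE E₇ i.castSucc) (hjf : ∀ i, j (genF E₆ i) = genF E₇ i.castSucc)
    (ε : 𝔢₆ →ₗ⁅ℂ⁆ 𝔢₇) (hε : Function.Injective ε) :
    ∃ φ : 𝔢₇ ≃ₗ⁅ℂ⁆ 𝔢₇, ∀ x, ε x = φ (j x) := by
  have : Nontrivial 𝔢₇ := hε.nontrivial
  obtain ⟨x, y, z, S⟩ := exists_extend_e₇ ε hε
  obtain ⟨φ, hφe, hφf⟩ := exists_lift S
  have hcomp : ∀ u, ε u = φ.comp j u := by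
    refine (generates_gen E₆).hom_ext (φ := ε) (ψ := φ.comp j) ?_ ?_
    · intro i
      rw [LieHom.comp_apply, hje, hφe, Fin.snoc_castSucc]; rfl
    · intro i
      rw [LieHom.comp_apply, hjf, hφf, Fin.snoc_castSucc]; rfl
  have hker : φ.ker = ⊥ := by
    by_contra hne
    have htop := ideal_e₇ _ hne
    obtain ⟨u, hu⟩ := exists_ne (0 : 𝔢₆)
    refine hu (hε ?_)
    have : j u ∈ φ.ker := htop ▸ LieSubmodule.mem_top _
    rw [hcomp, map_zero, LieHom.comp_apply]
    exact this
  have hinj : Function.Injective φ := φ.ker_eq_bot.mp hker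
  have hsurj : Function.Surjective φ := 
    (LinearMap.injective_iff_surjective (f := (φ : 𝔢₇ →ₗ[ℂ] 𝔢₇))).mp hinj
  exact ⟨LieEquiv.ofBijective φ ⟨hinj, hsurj⟩, fun x => hcomp x⟩

end Embeddings

end E6E7

/-- Any two injective Lie algebra homomorphisms from LieAlgebra.e₆ ℂ to LieAlgebra.e₇ ℂ are
conjugate by a Lie algebra automorphism of the codomain. -/
theorem stmt_18 (ε ε' : LieAlgebra.e₆ ℂ →ₗ⁅ℂ⁆ LieAlgebra.e₇ ℂ)
    (hε : Function.Injective ε) (hε' : Function.Injective ε') :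
    ∃ φ : LieAlgebra.e₇ ℂ ≃ₗ⁅ℂ⁆ LieAlgebra.e₇ ℂ, ∀ x : LieAlgebra.e₆ ℂ, ε' x = φ (ε x) := by
  rcases subsingleton_or_nontrivial (LieAlgebra.e₆ ℂ) with _ | _
  · refine ⟨LieEquiv.refl, fun x => ?_⟩
    rw [Subsingleton.elim x 0, map_zero, map_zero, map_zero]
  · obtain ⟨j, hje, hjf⟩ := E6E7.exists_lift
      (E6E7.serreData_block (E6E7.serreData_gen CartanMatrix.E₇))
    obtain ⟨φ, hφ⟩ := E6E7.exists_automorphism j hje hjf ε hε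
    obtain ⟨φ', hφ'⟩ := E6E7.exists_automorphism j hje hjf ε' hε'
    exact ⟨φ.symm.trans φ', fun x => by
      rw [hφ, hφ', LieEquiv.trans_apply, LieEquiv.symm_apply_apply]⟩
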